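/- arXiv:2412.12787 — 3 statements merged into one kernel-verified Lean document; each statement's English description precedes it below -/
import Mathlib

section
/- Let n ≥ 4 be an integer. Then σ̃_{2,max}(3,n) = (n−2)/(2n−5), and this maximum is attained by the barbell graph B(1, n−3, 3). -/
open scoped BigOperators
open Classical

/-- The Dirichlet energy of a function on a finite graph: `∑_{edges xy} (f x - f y)^2`. -/
noncomputable def dirichletEnergy {V : Type*} [Fintype V] (G : SimpleGraph V) (f : V → ℝ) : ℝ :=
  (∑ x : V, ∑ y : V, if G.Adj x y then (f x - f y) ^ 2 else 0) / 2

/-- The `k`-th Steklov (Dirichlet-to-Neumann) eigenvalue (1-indexed, in increasing order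
with multiplicity) of a finite graph `G` with boundary `B`, via the variational
(Courant–Fischer) characterization. -/
noncomputable def steklovEig {V : Type*} [Fintype V] (G : SimpleGraph V) (B : Finset V)
    (k : ℕ) : ℝ :=
  sInf { t : ℝ | ∃ F : Submodule ℝ (V → ℝ),
    Module.finrank ℝ (F.map (LinearMap.funLeft ℝ ℝ (fun x : {v // v ∈ B} => (x : V)))) = k ∧
    ∀ f ∈ F, dirichletEnergy G f ≤ t * ∑ x ∈ B, (f x) ^ 2 }

/-- The set of leaves (vertices of degree 1) of a finite graph, as a `Finset`. -/
noncomputable def leavesFinset {V : Type*} [Fintype V] (G : SimpleGraph V) : Finset V :=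
  Finset.univ.filter fun v => G.degree v = 1

/-- `σ_{k,max}(b,n)`: the maximum of the `k`-th Steklov eigenvalue over all trees with
`b` leaves (as boundary) and `n` vertices. -/
noncomputable def sigmaMax (k b n : ℕ) : ℝ :=
  sSup { s : ℝ | ∃ G : SimpleGraph (Fin n), G.IsTree ∧ (leavesFinset G).card = b ∧
    s = steklovEig G (leavesFinset G) k }

/-- `σ̃_{2,max}(D,n)`: the maximum of the first nontrivial Steklov eigenvalue over all
trees with diameter `D` and `n` vertices. -/
noncomputable def sigmaTildeMax (D n : ℕ) : ℝ :=
  sSup { s : ℝ | ∃ G : SimpleGraph (Fin n), G.IsTree ∧ G.diam = D ∧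
    s = steklovEig G (leavesFinset G) 2 }

/-- The barbell graph `B(p,q,D)`: a path with `D-1` vertices (`Sum.inr (Sum.inr w)`),
with `p` pendant vertices attached at the endpoint `w = 0` and `q` pendant vertices
attached at the endpoint `w = D-2`. -/
def barbell (p q D : ℕ) : SimpleGraph (Fin p ⊕ Fin q ⊕ Fin (D - 1)) :=
  SimpleGraph.fromRel fun x y =>
    match x, y with
    | Sum.inl _, Sum.inr (Sum.inr w) => (w : ℕ) = 0
    | Sum.inr (Sum.inl _), Sum.inr (Sum.inr w) => (w : ℕ) = D - 2
    | Sum.inr (Sum.inr w), Sum.inr (Sum.inr w') => (w' : ℕ) = (w : ℕ) + 1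
    | _, _ => False

/-!
The trees of diameter `3` are the double stars: two adjacent centres `a`, `b` carrying `p, q ≥ 1`
leaves, with `p + q = n - 2`. On a double star the Dirichlet energy of `f` splits into the variances
of `f` on the two groups of leaves, which contribute Rayleigh quotient `1`, and the energy of a
network of three resistors in series, of conductances `p`, `1`, `q`, between the two mean values.
Orthogonality to constants ties the two means together and Cauchy–Schwarz gives
`σ₂ = (p + q) / (p + q + p * q)`, attained at an explicit harmonic function. For fixed `p + q` the
product `p * q` is smallest when `p = 1`, which is the barbell.
-/

section Variational

lemma sum_const_add_mul_sq_of_sum_eq_zero {ι R : Type*} [CommRing R] {s : Finset ι} {g : ι → R}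
    (hg : ∑ i ∈ s, g i = 0) (c r : R) :
    ∑ i ∈ s, (c + r * g i) ^ 2 = s.card * c ^ 2 + r ^ 2 * ∑ i ∈ s, g i ^ 2 := by
  calc ∑ i ∈ s, (c + r * g i) ^ 2
      = ∑ i ∈ s, (c ^ 2 + 2 * c * r * g i + r ^ 2 * g i ^ 2) :=
        Finset.sum_congr rfl fun i _ => by ring
    _ = s.card * c ^ 2 + r ^ 2 * ∑ i ∈ s, g i ^ 2 := by
        simp only [Finset.sum_add_distrib, ← Finset.mul_sum, hg, Finset.sum_const, nsmul_eq_mul,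
          mul_zero, add_zero]

variable {V : Type*} [Fintype V] {G : SimpleGraph V} {B : Finset V} {k : ℕ} {t c : ℝ}

lemma dirichletEnergy_nonneg (G : SimpleGraph V) (f : V → ℝ) : 0 ≤ dirichletEnergy G f := by
  refine div_nonneg (Finset.sum_nonneg fun x _ => Finset.sum_nonneg fun y _ => ?_) zero_le_two
  split_ifs <;> positivity

lemma dirichletEnergy_const_add_mul (G : SimpleGraph V) (f : V → ℝ) (c r : ℝ) :
    dirichletEnergy G (fun x => c + r * f x) = r ^ 2 * dirichletEnergy G f := by
  simp only [dirichletEnergy, mul_div_assoc', Finset.mul_sum, mul_ite, mul_zero,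
    add_sub_add_left_eq_sub, ← mul_sub, mul_pow]

lemma dirichletEnergy_eq_sum_neighborFinset (G : SimpleGraph V) (f : V → ℝ) :
    dirichletEnergy G f = (∑ x, ∑ y ∈ G.neighborFinset x, (f x - f y) ^ 2) / 2 := by
  simp only [dirichletEnergy, SimpleGraph.neighborFinset_eq_filter, Finset.sum_filter]

/-- `t` is an admissible bound in the Courant–Fischer characterization of the `k`-th Steklov
eigenvalue: the Rayleigh quotient is at most `t` on some space of functions whose restrictions to
the boundary form a `k`-dimensional space. -/
def IsSteklovBound (G : SimpleGraph V) (B : Finset V) (k : ℕ) (t : ℝ) : Prop :=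
  ∃ F : Submodule ℝ (V → ℝ),
    Module.finrank ℝ (F.map (LinearMap.funLeft ℝ ℝ (fun x : {v // v ∈ B} => (x : V)))) = k ∧
    ∀ f ∈ F, dirichletEnergy G f ≤ t * ∑ x ∈ B, (f x) ^ 2

lemma IsSteklovBound.exists_sum_eq_zero (ht : IsSteklovBound G B k t) (hk : 1 < k) :
    ∃ f : V → ℝ, ∑ x ∈ B, f x = 0 ∧ 0 < ∑ x ∈ B, f x ^ 2 ∧
      dirichletEnergy G f ≤ t * ∑ x ∈ B, f x ^ 2 := by
  obtain ⟨F, hF, hbound⟩ := ht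
  let total : F.map (LinearMap.funLeft ℝ ℝ (fun x : {v // v ∈ B} => (x : V))) →ₗ[ℝ] ℝ :=
    (∑ i, LinearMap.proj i) ∘ₗ Submodule.subtype _
  have hker : LinearMap.ker total ≠ ⊥ :=
    LinearMap.ker_ne_bot_of_finrank_lt (by rwa [hF, Module.finrank_self])
  obtain ⟨⟨-, f, hf, rfl⟩, hsum, hne⟩ := (Submodule.ne_bot_iff _).mp hker
  refine ⟨f, ?_, ?_, hbound f hf⟩
  · rw [← Finset.sum_coe_sort]
    simpa [total, LinearMap.funLeft_apply] using hsum
  · have hsq : ∀ x ∈ B, 0 ≤ f x ^ 2 := fun x _ => sq_nonneg (f x)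
    refine (Finset.sum_nonneg hsq).lt_of_ne' fun h0 => hne (Subtype.ext (funext fun x => ?_))
    exact pow_eq_zero_iff two_ne_zero |>.mp ((Finset.sum_eq_zero_iff_of_nonneg hsq).mp h0 x x.2)

lemma isSteklovBound_two {g : V → ℝ} (hsum : ∑ x ∈ B, g x = 0) (hpos : 0 < ∑ x ∈ B, g x ^ 2)
    (hg : dirichletEnergy G g ≤ t * ∑ x ∈ B, g x ^ 2) : IsSteklovBound G B 2 t := by
  have ht : 0 ≤ t := nonneg_of_mul_nonneg_left ((dirichletEnergy_nonneg G g).trans hg) hpos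
  have hB : B.Nonempty := Finset.nonempty_of_sum_ne_zero hpos.ne'
  refine ⟨Submodule.span ℝ (Set.range ![1, g]), ?_, ?_⟩
  · have hind : LinearIndependent ℝ
        (LinearMap.funLeft ℝ ℝ (fun x : {v // v ∈ B} => (x : V)) ∘ ![1, g]) := by
      rw [Fintype.linearIndependent_iff]
      intro w hw
      have hzero : ∑ x ∈ B, (w 0 + w 1 * g x) ^ 2 = 0 := Finset.sum_eq_zero fun x hx => by
        simpa [Fin.sum_univ_two, LinearMap.funLeft_apply] using congrFun hw ⟨x, hx⟩
      rw [sum_const_add_mul_sq_of_sum_eq_zero hsum] at hzero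
      have hw1 : w 1 = 0 := by
        by_contra hne
        have : 0 < w 1 ^ 2 * ∑ x ∈ B, g x ^ 2 := by positivity
        have : 0 ≤ B.card * w 0 ^ 2 := by positivity
        linarith
      have hw0 : w 0 = 0 := by simpa [hw1, hB.ne_empty] using hzero
      exact Fin.forall_fin_two.mpr ⟨hw0, hw1⟩
    rw [Submodule.map_span, ← Set.range_comp, finrank_span_eq_card hind, Fintype.card_fin]
  · intro f hf
    obtain ⟨c, r, rfl⟩ : ∃ c r : ℝ, (fun x => c + r * g x) = f := by
      rw [Matrix.range_cons_cons_empty] at hf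
      obtain ⟨c, r, rfl⟩ := Submodule.mem_span_pair.mp hf
      exact ⟨c, r, by ext; simp⟩
    rw [dirichletEnergy_const_add_mul, sum_const_add_mul_sq_of_sum_eq_zero hsum]
    calc r ^ 2 * dirichletEnergy G g ≤ r ^ 2 * (t * ∑ x ∈ B, g x ^ 2) := by gcongr
      _ ≤ t * (B.card * c ^ 2 + r ^ 2 * ∑ x ∈ B, g x ^ 2) := by
        have : 0 ≤ t * (B.card * c ^ 2) := by positivity
        linarith

theorem steklovEig_two_eq {g : V → ℝ}
    (hc : ∀ f : V → ℝ, ∑ x ∈ B, f x = 0 → c * ∑ x ∈ B, f x ^ 2 ≤ dirichletEnergy G f)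
    (hsum : ∑ x ∈ B, g x = 0) (hpos : 0 < ∑ x ∈ B, g x ^ 2)
    (hg : dirichletEnergy G g ≤ c * ∑ x ∈ B, g x ^ 2) :
    steklovEig G B 2 = c := by
  refine IsLeast.csInf_eq ⟨isSteklovBound_two hsum hpos hg, fun t ht => ?_⟩
  obtain ⟨f, hf0, hfpos, hft⟩ := IsSteklovBound.exists_sum_eq_zero ht one_lt_two
  exact le_of_mul_le_mul_right ((hc f hf0).trans hft) hfpos

end Variational

section Inequalities

lemma sum_sub_sq_eq_sum_sub_mean_sq_add {ι K : Type*} [Field K] [CharZero K] (s : Finset ι)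
    (f : ι → K) (c : K) :
    ∑ i ∈ s, (f i - c) ^ 2 = ∑ i ∈ s, (f i - (∑ j ∈ s, f j) / s.card) ^ 2 +
      s.card * ((∑ j ∈ s, f j) / s.card - c) ^ 2 := by
  obtain rfl | hs := s.eq_empty_or_nonempty
  · simp
  have hcard : (s.card : K) ≠ 0 := Nat.cast_ne_zero.mpr hs.card_ne_zero
  simp only [sub_sq, Finset.sum_add_distrib, Finset.sum_sub_distrib, ← Finset.sum_mul,
    ← Finset.mul_sum, Finset.sum_const, nsmul_eq_mul]
  field_simp
  ring

lemma sum_sq_eq_sum_sub_mean_sq_add {ι K : Type*} [Field K] [CharZero K] (s : Finset ι)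
    (f : ι → K) :
    ∑ i ∈ s, f i ^ 2 = ∑ i ∈ s, (f i - (∑ j ∈ s, f j) / s.card) ^ 2 +
      s.card * ((∑ j ∈ s, f j) / s.card) ^ 2 := by
  simpa only [sub_zero] using sum_sub_sq_eq_sum_sub_mean_sq_add s f 0

variable {p q : ℝ}

-- Resistors of conductance `p`, `1`, `q` in series conduct `p * q / (p + q + p * q)`.
lemma mul_sq_le_energy_of_series (hp : 0 < p) (hq : 0 < q) (A B X Y : ℝ) :
    p * q * (X - Y) ^ 2 ≤
      (p + q + p * q) * ((A - B) ^ 2 + p * (X - A) ^ 2 + q * (Y - B) ^ 2) := by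
  have cauchy := Finset.univ.sq_sum_div_le_sum_sq_div ![X - A, A - B, B - Y]
    (g := ![1 / p, 1, 1 / q]) (by simp [Fin.forall_fin_succ, hp, hq])
  simp only [Fin.sum_univ_three, Matrix.cons_val] at cauchy
  rw [div_le_iff₀ (by positivity)] at cauchy
  have := mul_le_mul_of_nonneg_left cauchy (mul_pos hp hq).le
  field_simp at this
  ring_nf at this ⊢
  linarith

lemma two_hub_poincare (hp : 0 < p) (hq : 0 < q) (A B : ℝ) {X Y : ℝ} (h : p * X + q * Y = 0) :
    (p + q) / (p + q + p * q) * (p * X ^ 2 + q * Y ^ 2) ≤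
      (A - B) ^ 2 + p * (X - A) ^ 2 + q * (Y - B) ^ 2 := by
  have hmean : (p + q) * (p * X ^ 2 + q * Y ^ 2) = p * q * (X - Y) ^ 2 := by
    linear_combination (p * X + q * Y) * h
  rw [div_mul_eq_mul_div, div_le_iff₀' (by positivity), hmean]
  exact mul_sq_le_energy_of_series hp hq A B X Y

end Inequalities

section Trees

variable {V : Type*} {G : SimpleGraph V} {u v w x y : V}

lemma dist_eq_length_of_isPath (hG : G.IsAcyclic) {p : G.Walk u v} (hp : p.IsPath) :
    G.dist u v = p.length := by
  obtain ⟨q, hq, hlen⟩ := p.reachable.exists_path_of_dist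
  have := hG.subsingleton_path u v
  have hqp : q = p := congrArg Subtype.val (Subsingleton.elim (⟨q, hq⟩ : G.Path u v) ⟨p, hp⟩)
  rw [← hlen, hqp]

lemma dist_eq_three_of_isAcyclic (hG : G.IsAcyclic) (huv : G.Adj u v) (hvw : G.Adj v w)
    (hwx : G.Adj w x) (huw : u ≠ w) (hvx : v ≠ x) : G.dist u x = 3 := by
  refine dist_eq_length_of_isPath hG (p := .cons huv (.cons hvw (.cons hwx .nil))) ?_
  rw [hG.isPath_iff_isChain]
  simp [huw, hvx, huv.ne, hvw.ne, hwx.ne]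

lemma dist_eq_four_of_isAcyclic (hG : G.IsAcyclic) (huv : G.Adj u v) (hvw : G.Adj v w)
    (hwx : G.Adj w x) (hxy : G.Adj x y) (huw : u ≠ w) (hvx : v ≠ x) (hwy : w ≠ y) :
    G.dist u y = 4 := by
  refine dist_eq_length_of_isPath hG (p := .cons huv (.cons hvw (.cons hwx (.cons hxy .nil)))) ?_
  rw [hG.isPath_iff_isChain]
  simp [huw, hvx, hwy, huv.ne, hvw.ne, hwx.ne, hxy.ne]

lemma exists_mem_support_ne_of_isCycle {p : G.Walk u u} (hp : p.IsCycle) (v w : V) :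
    ∃ x ∈ p.support, x ≠ v ∧ x ≠ w := by
  have hcard : ({v, w} : Finset V).card < p.support.tail.toFinset.card := by
    rw [List.toFinset_card_of_nodup hp.support_nodup, List.length_tail,
      SimpleGraph.Walk.length_support, Nat.add_sub_cancel]
    exact Finset.card_le_two.trans_lt hp.three_le_length
  obtain ⟨x, hx, hxvw⟩ := Finset.exists_mem_notMem_of_card_lt_card hcard
  exact ⟨x, List.mem_of_mem_tail (List.mem_toFinset.mp hx), by simpa using hxvw⟩

lemma exists_path_of_diam_eq_three (hd : G.diam = 3) :
    ∃ u a b v, G.Adj u a ∧ G.Adj a b ∧ G.Adj b v ∧ u ≠ b ∧ a ≠ v := by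
  have : Nontrivial V := SimpleGraph.nontrivial_of_diam_ne_zero (hd ▸ three_ne_zero)
  obtain ⟨u, v, huv⟩ := G.exists_dist_eq_diam
  rw [hd] at huv
  obtain ⟨p, hp, hlen⟩ :=
    (SimpleGraph.Reachable.of_dist_ne_zero (huv ▸ three_ne_zero)).exists_path_of_dist
  rw [huv] at hlen
  match p with
  | .cons hua (.cons hab (.cons hbv .nil)) =>
    simp only [SimpleGraph.Walk.cons_isPath_iff, SimpleGraph.Walk.support_cons,
      SimpleGraph.Walk.support_nil, List.mem_cons, not_or] at hp
    exact ⟨u, _, _, v, hua, hab, hbv, hp.2.2.1, hp.1.2.2.1⟩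

end Trees

/-- `G` is a double star with centres `a` and `b`: the centres are adjacent, every other vertex is
pendant at one of them, and each centre carries at least one pendant vertex. -/
structure IsDoubleStar {V : Type*} (G : SimpleGraph V) (a b : V) : Prop where
  adj : G.Adj a b
  neighborSet_eq ⦃x : V⦄ : x ≠ a → x ≠ b → G.neighborSet x = {a} ∨ G.neighborSet x = {b}
  exists_adj_left : ∃ u, u ≠ b ∧ G.Adj a u
  exists_adj_right : ∃ v, v ≠ a ∧ G.Adj b v

/-- The neighbours of `a` other than `b`; in a double star with centres `a` and `b` these are the
leaves attached to `a`. -/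
noncomputable def pendants {V : Type*} [Fintype V] (G : SimpleGraph V) (a b : V) : Finset V :=
  (G.neighborFinset a).erase b

lemma mem_pendants {V : Type*} [Fintype V] {G : SimpleGraph V} {a b x : V} :
    x ∈ pendants G a b ↔ x ≠ b ∧ G.Adj a x := by
  rw [pendants, Finset.mem_erase, SimpleGraph.mem_neighborFinset]

lemma card_pendants_iso {V W : Type*} [Fintype V] [Fintype W] {G : SimpleGraph V}
    {H : SimpleGraph W} (e : G ≃g H) (a b : V) :
    (pendants H (e a) (e b)).card = (pendants G a b).card := by
  refine (Finset.card_bijective e e.bijective fun x => ?_).symm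
  rw [mem_pendants, mem_pendants, e.map_adj_iff, e.injective.ne_iff]

namespace IsDoubleStar

variable {V W : Type*} {G : SimpleGraph V} {H : SimpleGraph W} {a b x : V}

lemma symm (h : IsDoubleStar G a b) : IsDoubleStar G b a where
  adj := h.adj.symm
  neighborSet_eq _ hb ha := (h.neighborSet_eq ha hb).symm
  exists_adj_left := h.exists_adj_right
  exists_adj_right := h.exists_adj_left

lemma map_iso (h : IsDoubleStar G a b) (e : G ≃g H) : IsDoubleStar H (e a) (e b) where
  adj := e.map_adj_iff.mpr h.adj
  neighborSet_eq := by
    intro y hya hyb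
    obtain ⟨x, rfl⟩ := e.surjective y
    have := h.neighborSet_eq (mt (congrArg e) hya) (mt (congrArg e) hyb)
    simpa [Set.ext_iff, e.surjective.forall, e.map_adj_iff] using this
  exists_adj_left := by simpa [e.surjective.exists, e.map_adj_iff] using h.exists_adj_left
  exists_adj_right := by simpa [e.surjective.exists, e.map_adj_iff] using h.exists_adj_right

lemma adj_left_or_adj_right (h : IsDoubleStar G a b) (x : V) : G.Adj a x ∨ G.Adj b x := by
  by_cases hxa : x = a
  · exact .inr (hxa ▸ h.adj.symm)
  by_cases hxb : x = b
  · exact .inl (hxb ▸ h.adj)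
  simp only [G.adj_comm _ x, ← G.mem_neighborSet x]
  exact (h.neighborSet_eq hxa hxb).imp (fun hx => by simp [hx]) (fun hx => by simp [hx])

lemma connected (h : IsDoubleStar G a b) : G.Connected := by
  have hreach (x : V) : G.Reachable a x :=
    (h.adj_left_or_adj_right x).elim (·.reachable) fun hb => h.adj.reachable.trans hb.reachable
  have : Nonempty V := ⟨a⟩
  exact ⟨fun x y => (hreach x).symm.trans (hreach y)⟩

lemma isTree (h : IsDoubleStar G a b) : G.IsTree := by
  refine ⟨h.connected, fun v p hp => ?_⟩
  obtain ⟨x, hx, hxa, hxb⟩ := exists_mem_support_ne_of_isCycle hp a b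
  obtain ⟨c, hc⟩ : ∃ c, G.neighborSet x = {c} :=
    (h.neighborSet_eq hxa hxb).elim (⟨a, ·⟩) (⟨b, ·⟩)
  have hle : (p.toSubgraph.neighborSet x).ncard ≤ (G.neighborSet x).ncard :=
    Set.ncard_le_ncard (p.toSubgraph.neighborSet_subset x) (hc ▸ Set.finite_singleton c)
  rw [hp.ncard_neighborSet_toSubgraph_eq_two hx, hc, Set.ncard_singleton] at hle
  omega

lemma ediam_le_three (h : IsDoubleStar G a b) : G.ediam ≤ 3 := by
  refine SimpleGraph.ediam_le_of_edist_le (k := 3) fun u v => ?_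
  have hcenter (x : V) : ∃ c, (c = a ∨ c = b) ∧ G.edist c x = 1 := by
    simpa [SimpleGraph.edist_eq_one_iff_adj] using h.adj_left_or_adj_right x
  obtain ⟨c, hc, hcu⟩ := hcenter u
  obtain ⟨d, hd, hdv⟩ := hcenter v
  have hcd : G.edist c d ≤ 1 := by
    rw [SimpleGraph.edist_le_one_iff_adj_or_eq]
    rcases hc with rfl | rfl <;> rcases hd with rfl | rfl <;> simp [h.adj, h.adj.symm]
  calc G.edist u v ≤ G.edist u c + G.edist c v := G.edist_triangle
    _ ≤ G.edist u c + (G.edist c d + G.edist d v) := by gcongr; exact G.edist_triangle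
    _ ≤ 1 + (1 + 1) := by rw [G.edist_comm, hcu, hdv]; gcongr
    _ = 3 := by norm_num

lemma diam_eq_three (h : IsDoubleStar G a b) : G.diam = 3 := by
  refine le_antisymm (ENat.toNat_le_of_le_natCast h.ediam_le_three) ?_
  obtain ⟨u, hub, hau⟩ := h.exists_adj_left
  obtain ⟨v, hva, hbv⟩ := h.exists_adj_right
  rw [← dist_eq_three_of_isAcyclic h.isTree.isAcyclic hau.symm h.adj hbv hub hva.symm]
  exact SimpleGraph.dist_le_diam (ne_top_of_le_ne_top (ENat.natCast_ne_top 3) h.ediam_le_three)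

section Fintype

variable [Fintype V]

lemma pendants_left_nonempty (h : IsDoubleStar G a b) : (pendants G a b).Nonempty :=
  h.exists_adj_left.imp fun _ => mem_pendants.mpr

lemma neighborFinset_left (h : IsDoubleStar G a b) :
    G.neighborFinset a = insert b (pendants G a b) :=
  (Finset.insert_erase (G.mem_neighborFinset a b |>.mpr h.adj)).symm

lemma degree_left (h : IsDoubleStar G a b) : G.degree a = (pendants G a b).card + 1 := by
  rw [← G.card_neighborFinset_eq_degree, h.neighborFinset_left,
    Finset.card_insert_of_notMem (by simp [mem_pendants])]

lemma neighborFinset_of_mem_pendants (h : IsDoubleStar G a b) (hx : x ∈ pendants G a b) :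
    G.neighborFinset x = {a} := by
  obtain ⟨hxb, hax⟩ := mem_pendants.mp hx
  have ha : a ∈ G.neighborSet x := hax.symm
  rcases h.neighborSet_eq hax.ne' hxb with hN | hN
  · rw [← Finset.coe_inj, SimpleGraph.coe_neighborFinset, hN, Finset.coe_singleton]
  · exact absurd (hN.subset ha) h.adj.ne

lemma degree_of_mem_pendants (h : IsDoubleStar G a b) (hx : x ∈ pendants G a b) :
    G.degree x = 1 := by
  rw [← G.card_neighborFinset_eq_degree, h.neighborFinset_of_mem_pendants hx,
    Finset.card_singleton]

lemma disjoint_pendants (h : IsDoubleStar G a b) :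
    Disjoint (pendants G a b) (pendants G b a) := by
  refine Finset.disjoint_left.mpr fun x hx hx' => h.adj.ne ?_
  rw [← Finset.singleton_inj, ← h.neighborFinset_of_mem_pendants hx,
    h.symm.neighborFinset_of_mem_pendants hx']

lemma univ_eq (h : IsDoubleStar G a b) :
    (Finset.univ : Finset V) = insert a (insert b (pendants G a b ∪ pendants G b a)) := by
  ext x
  have := h.adj_left_or_adj_right x
  simp only [Finset.mem_univ, Finset.mem_insert, Finset.mem_union, mem_pendants, true_iff]
  tauto

lemma sum_univ (h : IsDoubleStar G a b) {M : Type*} [AddCommMonoid M] (f : V → M) :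
    ∑ x, f x = f a + (f b + (∑ x ∈ pendants G a b, f x + ∑ x ∈ pendants G b a, f x)) := by
  rw [h.univ_eq, Finset.sum_insert, Finset.sum_insert, Finset.sum_union h.disjoint_pendants]
  · simp [mem_pendants]
  · simp [mem_pendants, h.adj.ne]

lemma card_eq (h : IsDoubleStar G a b) :
    Fintype.card V = (pendants G a b).card + (pendants G b a).card + 2 := by
  rw [Fintype.card_eq_sum_ones, h.sum_univ, ← Finset.card_eq_sum_ones, ← Finset.card_eq_sum_ones]
  ring

lemma leavesFinset_eq (h : IsDoubleStar G a b) :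
    leavesFinset G = pendants G a b ∪ pendants G b a := by
  ext x
  simp only [leavesFinset, Finset.mem_filter, Finset.mem_univ, true_and, Finset.mem_union]
  refine ⟨fun hx => ?_, Or.rec h.degree_of_mem_pendants h.symm.degree_of_mem_pendants⟩
  have hmem := Finset.mem_univ x
  simp only [h.univ_eq, Finset.mem_insert, Finset.mem_union] at hmem
  rcases hmem with rfl | rfl | hmem
  · have := h.degree_left
    have := h.pendants_left_nonempty.card_pos
    omega
  · have := h.symm.degree_left
    have := h.symm.pendants_left_nonempty.card_pos
    omega
  · exact hmem

lemma sum_leavesFinset (h : IsDoubleStar G a b) {M : Type*} [AddCommMonoid M] (f : V → M) :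
    ∑ x ∈ leavesFinset G, f x = ∑ x ∈ pendants G a b, f x + ∑ x ∈ pendants G b a, f x := by
  rw [h.leavesFinset_eq, Finset.sum_union h.disjoint_pendants]

end Fintype

end IsDoubleStar

lemma neighborSet_eq_singleton_of_dist_le_three {V : Type*} {G : SimpleGraph V} {a b v x : V}
    (hG : G.IsAcyclic) (hdist : ∀ y z, G.dist y z ≤ 3) (hab : G.Adj a b) (hbv : G.Adj b v)
    (hav : a ≠ v) (hax : G.Adj a x) (hxb : x ≠ b) : G.neighborSet x = {a} := by
  ext y
  refine ⟨fun hxy => ?_, fun hya => hya ▸ hax.symm⟩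
  by_contra hya
  have := dist_eq_four_of_isAcyclic hG hxy.symm hax.symm hab hbv hya hxb hav
  have := hdist y v
  omega

lemma isDoubleStar_of_dist_le_three {V : Type*} {G : SimpleGraph V} {u a b v : V}
    (hG : G.IsTree) (hdist : ∀ y z, G.dist y z ≤ 3) (hua : G.Adj u a) (hab : G.Adj a b)
    (hbv : G.Adj b v) (hub : u ≠ b) (hav : a ≠ v) : IsDoubleStar G a b := by
  have hleft {x : V} (hax : G.Adj a x) (hxb : x ≠ b) : G.neighborSet x = {a} :=
    neighborSet_eq_singleton_of_dist_le_three hG.isAcyclic hdist hab hbv hav hax hxb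
  have hright {x : V} (hbx : G.Adj b x) (hxa : x ≠ a) : G.neighborSet x = {b} :=
    neighborSet_eq_singleton_of_dist_le_three hG.isAcyclic hdist hab.symm hua.symm hub.symm hbx hxa
  have hclosed {x y : V} (hxy : G.Adj x y) (hx : G.Adj a x ∨ G.Adj b x) :
      G.Adj a y ∨ G.Adj b y := by
    by_cases hxa : x = a
    · exact .inl (hxa ▸ hxy)
    by_cases hxb : x = b
    · exact .inr (hxb ▸ hxy)
    rcases hx with hx | hx
    · obtain rfl : y = a := (hleft hx hxb).subset hxy
      exact .inr hab.symm
    · obtain rfl : y = b := (hright hx hxa).subset hxy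
      exact .inl hab
  have hdominating (x : V) : G.Adj a x ∨ G.Adj b x := by
    induction (G.reachable_iff_reflTransGen b x).mp (hG.connected.preconnected b x) with
    | refl => exact .inl hab
    | tail _ hxy ih => exact hclosed hxy ih
  exact
    { adj := hab
      neighborSet_eq := fun x hxa hxb =>
        (hdominating x).imp (hleft · hxb) (hright · hxa)
      exists_adj_left := ⟨u, hub, hua.symm⟩
      exists_adj_right := ⟨v, hav.symm, hbv⟩ }

theorem isTree_and_diam_eq_three_iff {V : Type*} {G : SimpleGraph V} :
    G.IsTree ∧ G.diam = 3 ↔ ∃ a b, IsDoubleStar G a b := by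
  refine ⟨fun ⟨hG, hd⟩ => ?_, fun ⟨a, b, h⟩ => ⟨h.isTree, h.diam_eq_three⟩⟩
  have hdist (y z : V) : G.dist y z ≤ 3 :=
    hd ▸ SimpleGraph.dist_le_diam (SimpleGraph.ediam_ne_top_of_diam_ne_zero (hd ▸ three_ne_zero))
  obtain ⟨u, a, b, v, hua, hab, hbv, hub, hav⟩ := exists_path_of_diam_eq_three hd
  exact ⟨a, b, isDoubleStar_of_dist_le_three hG hdist hua hab hbv hub hav⟩

namespace IsDoubleStar

variable {V : Type*} [Fintype V] {G : SimpleGraph V} {a b : V}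

lemma dirichletEnergy_eq (h : IsDoubleStar G a b) (f : V → ℝ) :
    dirichletEnergy G f = (f a - f b) ^ 2 + ∑ x ∈ pendants G a b, (f x - f a) ^ 2 +
      ∑ x ∈ pendants G b a, (f x - f b) ^ 2 := by
  have hleft : ∀ x ∈ pendants G a b, ∑ y ∈ G.neighborFinset x, (f x - f y) ^ 2 = (f x - f a) ^ 2 :=
    fun x hx => by rw [h.neighborFinset_of_mem_pendants hx, Finset.sum_singleton]
  have hright : ∀ x ∈ pendants G b a, ∑ y ∈ G.neighborFinset x, (f x - f y) ^ 2 = (f x - f b) ^ 2 :=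
    fun x hx => by rw [h.symm.neighborFinset_of_mem_pendants hx, Finset.sum_singleton]
  rw [dirichletEnergy_eq_sum_neighborFinset, h.sum_univ, h.neighborFinset_left,
    h.symm.neighborFinset_left, Finset.sum_insert (by simp [mem_pendants]),
    Finset.sum_insert (by simp [mem_pendants]), Finset.sum_congr rfl hleft,
    Finset.sum_congr rfl hright]
  have hcomm (c : V) (s : Finset V) : ∑ x ∈ s, (f c - f x) ^ 2 = ∑ x ∈ s, (f x - f c) ^ 2 :=
    Finset.sum_congr rfl fun x _ => sub_sq_comm _ _
  rw [hcomm, hcomm, sub_sq_comm (f b)]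
  ring

lemma card_pendants_left_pos (h : IsDoubleStar G a b) : (0 : ℝ) < (pendants G a b).card :=
  Nat.cast_pos.mpr h.pendants_left_nonempty.card_pos

lemma poincare (h : IsDoubleStar G a b) {f : V → ℝ} (hf : ∑ x ∈ leavesFinset G, f x = 0) :
    ((pendants G a b).card + (pendants G b a).card : ℝ) /
        ((pendants G a b).card + (pendants G b a).card +
          (pendants G a b).card * (pendants G b a).card) *
      ∑ x ∈ leavesFinset G, f x ^ 2 ≤ dirichletEnergy G f := by
  have hp := h.card_pendants_left_pos
  have hq := h.symm.card_pendants_left_pos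
  rw [h.sum_leavesFinset] at hf ⊢
  rw [h.dirichletEnergy_eq, sum_sub_sq_eq_sum_sub_mean_sq_add _ f (f a),
    sum_sub_sq_eq_sum_sub_mean_sq_add _ f (f b), sum_sq_eq_sum_sub_mean_sq_add (pendants G a b),
    sum_sq_eq_sum_sub_mean_sq_add (pendants G b a)]
  set p : ℝ := ((pendants G a b).card : ℝ)
  set q : ℝ := ((pendants G b a).card : ℝ)
  set X := (∑ x ∈ pendants G a b, f x) / p with hX
  set Y := (∑ x ∈ pendants G b a, f x) / q with hY
  have hmean : p * X + q * Y = 0 := by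
    rwa [hX, hY, mul_div_cancel₀ _ hp.ne', mul_div_cancel₀ _ hq.ne']
  have hle : (p + q) / (p + q + p * q) ≤ 1 :=
    div_le_one_of_le₀ (le_add_of_nonneg_right (by positivity)) (by positivity)
  have hvarP : (p + q) / (p + q + p * q) * ∑ x ∈ pendants G a b, (f x - X) ^ 2 ≤
      ∑ x ∈ pendants G a b, (f x - X) ^ 2 := mul_le_of_le_one_left (by positivity) hle
  have hvarQ : (p + q) / (p + q + p * q) * ∑ x ∈ pendants G b a, (f x - Y) ^ 2 ≤
      ∑ x ∈ pendants G b a, (f x - Y) ^ 2 := mul_le_of_le_one_left (by positivity) hle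
  linarith [two_hub_poincare hp hq (f a) (f b) hmean]

lemma exists_forall_mem_pendants_eq (h : IsDoubleStar G a b) {M : Type*} (α β γ δ : M) :
    ∃ g : V → M, g a = α ∧ g b = β ∧ (∀ x ∈ pendants G a b, g x = γ) ∧
      ∀ x ∈ pendants G b a, g x = δ := by
  refine ⟨fun x => if x = a then α else if x = b then β else if x ∈ pendants G a b then γ else δ,
    if_pos rfl, by simp [h.adj.ne'], fun x hx => ?_, fun x hx => ?_⟩
  · obtain ⟨hxb, hax⟩ := mem_pendants.mp hx
    simp [hx, hxb, hax.ne']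
  · obtain ⟨hxa, hbx⟩ := mem_pendants.mp hx
    simp [Finset.disjoint_right.mp h.disjoint_pendants hx, hxa, hbx.ne']

theorem steklovEig_two (h : IsDoubleStar G a b) :
    steklovEig G (leavesFinset G) 2 =
      ((pendants G a b).card + (pendants G b a).card : ℝ) /
        ((pendants G a b).card + (pendants G b a).card +
          (pendants G a b).card * (pendants G b a).card) := by
  have hp := h.card_pendants_left_pos
  have hq := h.symm.card_pendants_left_pos
  set p : ℝ := ((pendants G a b).card : ℝ)
  set q : ℝ := ((pendants G b a).card : ℝ)
  -- The harmonic extension of `q` on the leaves at `a` and `-p` on those at `b`, with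
  -- denominators cleared.
  obtain ⟨g, hga, hgb, hgP, hgQ⟩ := h.exists_forall_mem_pendants_eq (p * q * q) (-(p * q * p))
    ((p + q + p * q) * q) (-((p + q + p * q) * p))
  have hsumP (φ : ℝ → ℝ) : ∑ x ∈ pendants G a b, φ (g x) = p * φ ((p + q + p * q) * q) := by
    rw [Finset.sum_congr rfl fun x hx => congrArg φ (hgP x hx), Finset.sum_const, nsmul_eq_mul]
  have hsumQ (φ : ℝ → ℝ) : ∑ x ∈ pendants G b a, φ (g x) = q * φ (-((p + q + p * q) * p)) := by
    rw [Finset.sum_congr rfl fun x hx => congrArg φ (hgQ x hx), Finset.sum_const, nsmul_eq_mul]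
  have hsum : ∑ x ∈ leavesFinset G, g x = 0 := by
    rw [h.sum_leavesFinset, hsumP fun t => t, hsumQ fun t => t]
    ring
  have hsq : ∑ x ∈ leavesFinset G, g x ^ 2 = p * q * (p + q) * (p + q + p * q) ^ 2 := by
    rw [h.sum_leavesFinset, hsumP (· ^ 2), hsumQ (· ^ 2)]
    ring
  have henergy : dirichletEnergy G g = p * q * (p + q) ^ 2 * (p + q + p * q) := by
    rw [h.dirichletEnergy_eq, hsumP fun t => (t - g a) ^ 2, hsumQ fun t => (t - g b) ^ 2, hga, hgb]
    ring
  refine steklovEig_two_eq (fun f => h.poincare) hsum (by rw [hsq]; positivity) (le_of_eq ?_)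
  rw [hsq, henergy]
  field_simp

lemma steklovEig_two_le (h : IsDoubleStar G a b) :
    steklovEig G (leavesFinset G) 2 ≤ ((Fintype.card V : ℝ) - 2) / (2 * Fintype.card V - 5) := by
  have hp : (1 : ℝ) ≤ (pendants G a b).card :=
    Nat.one_le_cast.mpr h.pendants_left_nonempty.card_pos
  have hq : (1 : ℝ) ≤ (pendants G b a).card :=
    Nat.one_le_cast.mpr h.symm.pendants_left_nonempty.card_pos
  rw [h.steklovEig_two, h.card_eq]
  push_cast
  rw [add_sub_cancel_right]
  refine div_le_div_of_nonneg_left (by positivity) (by linarith) ?_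
  linarith [mul_nonneg (sub_nonneg.mpr hp) (sub_nonneg.mpr hq)]

lemma steklovEig_two_of_iso {W : Type*} [Fintype W] {H : SimpleGraph W} (h : IsDoubleStar G a b)
    (e : G ≃g H) :
    steklovEig H (leavesFinset H) 2 = steklovEig G (leavesFinset G) 2 := by
  rw [(h.map_iso e).steklovEig_two, h.steklovEig_two, card_pendants_iso, card_pendants_iso]

end IsDoubleStar

section Barbell

variable {p q : ℕ}

lemma isDoubleStar_barbell (hp : 0 < p) (hq : 0 < q) :
    IsDoubleStar (barbell p q 3) (.inr (.inr (0 : Fin 2))) (.inr (.inr (1 : Fin 2))) where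
  adj := by simp [barbell]
  neighborSet_eq := by
    rintro (x | x | x) ha hb
    · left
      ext (y | y | y) <;> simp [barbell]
    · right
      ext (y | y | y)
      · simp [barbell]
      · simp [barbell]
      · fin_cases y <;> simp [barbell]
    · fin_cases x <;> simp at ha hb
  exists_adj_left := ⟨.inl ⟨0, hp⟩, by simp [barbell]⟩
  exists_adj_right := ⟨.inr (.inl ⟨0, hq⟩), by simp [barbell]⟩

lemma card_pendants_barbell_left (p q : ℕ) :
    (pendants (barbell p q 3) (.inr (.inr (0 : Fin 2))) (.inr (.inr (1 : Fin 2)))).card = p := by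
  have : pendants (barbell p q 3) (.inr (.inr (0 : Fin 2))) (.inr (.inr (1 : Fin 2))) =
      Finset.univ.map .inl := by
    ext (x | x | x)
    · simp [mem_pendants, barbell]
    · simp [mem_pendants, barbell]
    · fin_cases x <;> simp [mem_pendants, barbell]
  rw [this, Finset.card_map, Finset.card_fin]

lemma card_pendants_barbell_right (p q : ℕ) :
    (pendants (barbell p q 3) (.inr (.inr (1 : Fin 2))) (.inr (.inr (0 : Fin 2)))).card = q := by
  have : pendants (barbell p q 3) (.inr (.inr (1 : Fin 2))) (.inr (.inr (0 : Fin 2))) =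
      Finset.univ.map (Function.Embedding.inl.trans .inr) := by
    ext (x | x | x)
    · simp [mem_pendants, barbell]
    · simp [mem_pendants, barbell]
    · fin_cases x <;> simp [mem_pendants, barbell]
  rw [this, Finset.card_map, Finset.card_fin]

theorem steklovEig_barbell_three (hp : 0 < p) (hq : 0 < q) :
    steklovEig (barbell p q 3) (leavesFinset (barbell p q 3)) 2 =
      ((p : ℝ) + q) / (p + q + p * q) := by
  rw [(isDoubleStar_barbell hp hq).steklovEig_two, card_pendants_barbell_left,
    card_pendants_barbell_right]

lemma steklovEig_barbell_one_three {n : ℕ} (hn : 4 ≤ n) :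
    steklovEig (barbell 1 (n - 3) 3) (leavesFinset (barbell 1 (n - 3) 3)) 2 =
      ((n : ℝ) - 2) / (2 * n - 5) := by
  rw [steklovEig_barbell_three one_pos (by omega), Nat.cast_sub (by omega)]
  congr 1 <;> push_cast <;> ring

end Barbell

theorem isGreatest_steklovEig_two_of_diam_eq_three {n : ℕ} (hn : 4 ≤ n) :
    IsGreatest {s : ℝ | ∃ G : SimpleGraph (Fin n), G.IsTree ∧ G.diam = 3 ∧
      s = steklovEig G (leavesFinset G) 2} (((n : ℝ) - 2) / (2 * n - 5)) := by
  constructor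
  · have hcard : Fintype.card (Fin 1 ⊕ Fin (n - 3) ⊕ Fin (3 - 1)) = n := by
      simp only [Fintype.card_sum, Fintype.card_fin]
      omega
    have hB := isDoubleStar_barbell one_pos (q := n - 3) (by omega)
    let e := (barbell 1 (n - 3) 3).overFinIso hcard
    refine ⟨_, (hB.map_iso e).isTree, (hB.map_iso e).diam_eq_three, ?_⟩
    rw [hB.steklovEig_two_of_iso e, steklovEig_barbell_one_three hn]
  · rintro - ⟨G, hG, hd, rfl⟩
    obtain ⟨a, b, h⟩ := isTree_and_diam_eq_three_iff.mp ⟨hG, hd⟩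
    simpa only [Fintype.card_fin] using h.steklovEig_two_le

/-- Let `n ≥ 4` be an integer. Then `σ̃_{2,max}(3,n) = (n-2)/(2n-5)`, and
this maximum is attained by the barbell graph `B(1, n-3, 3)`. -/
theorem stmt7 (n : ℕ) (hn : 4 ≤ n) :
    sigmaTildeMax 3 n = ((n : ℝ) - 2) / (2 * (n : ℝ) - 5) ∧
    steklovEig (barbell 1 (n - 3) 3) (leavesFinset (barbell 1 (n - 3) 3)) 2 =
      ((n : ℝ) - 2) / (2 * (n : ℝ) - 5) := by
  exact ⟨(isGreatest_steklovEig_two_of_diam_eq_three hn).csSup_eq,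
    steklovEig_barbell_one_three hn⟩
end

section
/- Let D = 2r+1 ≥ 5 be an odd integer, and let b ≥ 2, 1 ≤ c ≤ r, and n be integers with 2r+2 ≤ n ≤ 2r + (b−2)c + 2. Then σ̃_{2,max}(D,n) ≥ C⁻(r,b,c). -/
open scoped BigOperators
open Classical

/-- The quantity `C⁻(r,b,c)` from the paper:
`(2br + b + 2c - 2r - 1 - √(b² - 2b + 4c² - 8cr - 4c + 4r² + 4r + 1)) /
  (2(br² + br + 2cr + c - 2r² - 2r))`. -/
noncomputable def Cminus (r b c : ℕ) : ℝ :=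
  (2 * b * r + b + 2 * c - 2 * r - 1 -
      Real.sqrt ((b : ℝ) ^ 2 - 2 * b + 4 * (c : ℝ) ^ 2 - 8 * c * r - 4 * c +
        4 * (r : ℝ) ^ 2 + 4 * r + 1)) /
    (2 * ((b : ℝ) * r ^ 2 + b * r + 2 * c * r + c - 2 * (r : ℝ) ^ 2 - 2 * r))

/-!
By Courant–Fischer (in its max–min form), `s ≤ σ₂` as soon as the Dirichlet energy is at least `s`
times the sum of squares over the leaves for all functions in the kernel of one linear form. The
tree is a spider: paths of lengths `r + 1`, `r` and `m i ≤ c` glued at a centre, with `b - 2` short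
legs (possibly of length `0`) whose total length is `n - (2r + 2)`. On a leg of length `ℓ` with
value `z` at the centre and `a` at the foot, the energy is at least `(a - z)² / ℓ`, and
`(a - z)² / ℓ = s a² - s z² / (1 - s ℓ) + ((1 - s ℓ) a - z)² / (ℓ (1 - s ℓ))`.
The last term is nonnegative if `s ℓ < 1`, and for the one leg with `s ℓ > 1` it vanishes on the
kernel of the linear form `(1 - s ℓ) a - z`. Hence `s ≤ σ₂` whenever the sum of `1 / (1 - s ℓ)` over
the legs is at most `0`. When all short legs have length `c`, equality in this condition is a
quadratic equation in `s` with smaller root `C⁻(r, b, c)`; shorter legs only decrease the sum.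
-/

section CourantFischer

variable {V : Type*} [Fintype V]

/-- The restriction of functions on the vertices to the boundary `B`, in the form in which it
occurs in `steklovEig`. -/
noncomputable abbrev boundaryRestrict (B : Finset V) : (V → ℝ) →ₗ[ℝ] ({v // v ∈ B} → ℝ) :=
  LinearMap.funLeft ℝ ℝ (fun x : {v // v ∈ B} => (x : V))

lemma exists_mem_map_eq_zero_map_ne_zero {K M N W : Type*} [DivisionRing K]
    [AddCommGroup M] [Module K M] [FiniteDimensional K M] [AddCommGroup N] [Module K N]
    [AddCommGroup W] [Module K W] [FiniteDimensional K W] (R : M →ₗ[K] N) (L : M →ₗ[K] W)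
    {F : Submodule K M} (h : Module.finrank K W < Module.finrank K (F.map R)) :
    ∃ f ∈ F, L f = 0 ∧ R f ≠ 0 := by
  by_contra! hker
  have hle : LinearMap.ker (L.domRestrict F) ≤ LinearMap.ker (R.domRestrict F) :=
    fun f hf => hker f f.2 hf
  have hdim := Submodule.finrank_mono hle
  have hR := (R.domRestrict F).finrank_range_add_finrank_ker
  have hL := (L.domRestrict F).finrank_range_add_finrank_ker
  have hW := Submodule.finrank_le (LinearMap.range (L.domRestrict F))
  rw [LinearMap.range_domRestrict] at hR
  omega

lemma dirichletEnergy_le_two_mul_card_mul_sum_sq (G : SimpleGraph V) (f : V → ℝ) :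
    dirichletEnergy G f ≤ 2 * Fintype.card V * ∑ x, f x ^ 2 := by
  have hterm (x y : V) :
      (if G.Adj x y then (f x - f y) ^ 2 else 0) ≤ 2 * f x ^ 2 + 2 * f y ^ 2 := by
    split_ifs
    · linarith [sq_nonneg (f x + f y)]
    · positivity
  have hsum : ∑ x, ∑ y, (2 * f x ^ 2 + 2 * f y ^ 2) = 4 * Fintype.card V * ∑ x, f x ^ 2 := by
    simp only [Finset.sum_add_distrib, Finset.sum_const, Finset.card_univ, nsmul_eq_mul,
      ← Finset.mul_sum]
    ring
  have := Finset.sum_le_sum fun x (_ : x ∈ Finset.univ) =>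
    Finset.sum_le_sum fun y (_ : y ∈ Finset.univ) => hterm x y
  unfold dirichletEnergy
  linarith

lemma exists_dirichletEnergy_le_of_le_card (G : SimpleGraph V) {B : Finset V} {k : ℕ}
    (hk : k ≤ B.card) :
    ∃ t : ℝ, ∃ F : Submodule ℝ (V → ℝ), Module.finrank ℝ (F.map (boundaryRestrict B)) = k ∧
      ∀ f ∈ F, dirichletEnergy G f ≤ t * ∑ x ∈ B, f x ^ 2 := by
  obtain ⟨T, hTB, rfl⟩ := Finset.exists_subset_card_eq hk
  let E : (T → ℝ) →ₗ[ℝ] (V → ℝ) := Function.ExtendByZero.linearMap ℝ Subtype.val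
  have hE (g : T → ℝ) (x : T) : E g x = g x := Subtype.val_injective.extend_apply g (0 : V → ℝ) x
  have hE_zero (g : T → ℝ) {x : V} (hx : x ∉ B) : E g x = 0 :=
    Function.extend_apply' g (0 : V → ℝ) x fun ⟨y, hy⟩ => hx (hy ▸ hTB y.2)
  have hinj : Function.Injective (boundaryRestrict B ∘ₗ E) := fun g g' h => funext fun x => by
    rw [← hE g, ← hE g']
    exact congrFun h ⟨x, hTB x.2⟩
  refine ⟨2 * Fintype.card V, LinearMap.range E, ?_, ?_⟩
  · rw [← LinearMap.range_comp, LinearMap.finrank_range_of_inj hinj,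
      Module.finrank_fintype_fun_eq_card, Fintype.card_coe]
  · rintro _ ⟨g, rfl⟩
    have hsupp : ∑ x ∈ B, E g x ^ 2 = ∑ x, E g x ^ 2 :=
      Finset.sum_subset (Finset.subset_univ B) fun x _ hx => by simp [hE_zero g hx]
    exact hsupp ▸ dirichletEnergy_le_two_mul_card_mul_sum_sq G (E g)

theorem le_steklovEig_of_forall_map_eq_zero {G : SimpleGraph V} {B : Finset V} {k : ℕ} {s : ℝ}
    {W : Type*} [AddCommGroup W] [Module ℝ W] [FiniteDimensional ℝ W] (L : (V → ℝ) →ₗ[ℝ] W)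
    (hW : Module.finrank ℝ W < k) (hk : k ≤ B.card)
    (h : ∀ f, L f = 0 → s * ∑ x ∈ B, f x ^ 2 ≤ dirichletEnergy G f) :
    s ≤ steklovEig G B k := by
  refine le_csInf (exists_dirichletEnergy_le_of_le_card G hk) ?_
  rintro t ⟨F, hF, hFt⟩
  obtain ⟨f, hfF, hLf, hf⟩ := exists_mem_map_eq_zero_map_ne_zero _ L (hF.symm ▸ hW)
  obtain ⟨x, hx⟩ := Function.ne_iff.1 hf
  have hpos : 0 < ∑ x ∈ B, f x ^ 2 :=
    Finset.sum_pos' (fun _ _ => sq_nonneg _) ⟨x, x.2, sq_pos_of_ne_zero hx⟩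
  exact le_of_mul_le_mul_right ((h f hLf).trans (hFt f hfF)) hpos

end CourantFischer

section Iso

lemma edist_map_le {V W : Type*} {G : SimpleGraph V} {H : SimpleGraph W} (φ : G →g H)
    (x y : V) : H.edist (φ x) (φ y) ≤ G.edist x y :=
  le_iInf fun w => by simpa using (w.map φ).edist_le

variable {V W : Type*} {G : SimpleGraph V} {H : SimpleGraph W}

lemma edist_map_iso (φ : G ≃g H) (x y : V) : H.edist (φ x) (φ y) = G.edist x y :=
  (edist_map_le φ.toHom x y).antisymm (by simpa using edist_map_le φ.symm.toHom (φ x) (φ y))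

lemma diam_eq_of_iso (φ : G ≃g H) : G.diam = H.diam := by
  simp only [SimpleGraph.diam, SimpleGraph.ediam_eq_iSup_iSup_edist]
  exact congrArg _ <| φ.toEquiv.iSup_congr fun x =>
    (φ.toEquiv.iSup_congr <| edist_map_iso φ x).symm

lemma boundaryRestrict_comp_funCongrLeft (e : V ≃ W) (B : Finset V) :
    boundaryRestrict B ∘ₗ (LinearEquiv.funCongrLeft ℝ ℝ e).toLinearMap =
      (LinearEquiv.funCongrLeft ℝ ℝ (e.subtypeEquiv fun x =>
          (by simp : x ∈ B ↔ e x ∈ B.map e.toEmbedding))).toLinearMap ∘ₗ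
        boundaryRestrict (B.map e.toEmbedding) :=
  rfl

lemma finrank_map_boundaryRestrict_funCongrLeft (e : V ≃ W) (B : Finset V)
    (F : Submodule ℝ (W → ℝ)) :
    Module.finrank ℝ ((F.map (LinearEquiv.funCongrLeft ℝ ℝ e).toLinearMap).map
        (boundaryRestrict B)) =
      Module.finrank ℝ (F.map (boundaryRestrict (B.map e.toEmbedding))) := by
  rw [← Submodule.map_comp, boundaryRestrict_comp_funCongrLeft, Submodule.map_comp]
  exact LinearEquiv.finrank_map_eq _ _

variable [Fintype V] [Fintype W]

lemma dirichletEnergy_comp_iso (φ : G ≃g H) (f : W → ℝ) :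
    dirichletEnergy G (f ∘ φ) = dirichletEnergy H f := by
  unfold dirichletEnergy
  congr 1
  refine Fintype.sum_equiv φ.toEquiv _ _ fun x => Fintype.sum_equiv φ.toEquiv _ _ fun y => ?_
  simp [φ.map_adj_iff]

lemma map_leavesFinset (φ : G ≃g H) :
    (leavesFinset G).map φ.toEquiv.toEmbedding = leavesFinset H := by
  ext y
  obtain ⟨x, rfl⟩ := φ.surjective y
  have hdeg : H.degree (φ x) = G.degree x := φ.degree_eq x
  exact (Finset.mem_map' _).trans (by simp [leavesFinset, hdeg])

lemma steklovEig_map_iso (φ : G ≃g H) (B : Finset V) (k : ℕ) :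
    steklovEig H (B.map φ.toEquiv.toEmbedding) k = steklovEig G B k := by
  let pull := LinearEquiv.funCongrLeft ℝ ℝ φ.toEquiv
  refine congrArg sInf <| Set.ext fun t => ?_
  refine (Submodule.orderIsoMapComap pull).toEquiv.exists_congr fun F => and_congr ?_ ?_
  · exact Eq.congr_left (finrank_map_boundaryRestrict_funCongrLeft φ.toEquiv B F).symm
  · change (∀ f ∈ F, _) ↔ ∀ f ∈ F.map pull.toLinearMap, _
    simp only [Submodule.mem_map, forall_exists_index, and_imp, forall_apply_eq_imp_iff₂]
    refine forall₂_congr fun f _ => ?_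
    have henergy : dirichletEnergy G (pull f) = dirichletEnergy H f := dirichletEnergy_comp_iso φ f
    have hboundary : ∑ x ∈ B, pull f x ^ 2 =
        ∑ y ∈ B.map φ.toEquiv.toEmbedding, f y ^ 2 := by
      rw [Finset.sum_map]; rfl
    rw [← henergy, ← hboundary]; rfl

lemma bddAbove_steklovEig_trees (D n : ℕ) :
    BddAbove { s : ℝ | ∃ G : SimpleGraph (Fin n), G.IsTree ∧ G.diam = D ∧
      s = steklovEig G (leavesFinset G) 2 } := by
  refine ((Set.finite_range fun G : SimpleGraph (Fin n) =>
    steklovEig G (leavesFinset G) 2).subset ?_).bddAbove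
  rintro _ ⟨G, -, -, rfl⟩
  exact ⟨G, rfl⟩

theorem steklovEig_two_le_sigmaTildeMax (hG : G.IsTree) :
    steklovEig G (leavesFinset G) 2 ≤ sigmaTildeMax G.diam (Fintype.card V) := by
  let φ := G.overFinIso rfl
  refine le_csSup (bddAbove_steklovEig_trees _ _)
    ⟨G.overFin rfl, φ.isTree_iff.1 hG, (diam_eq_of_iso φ).symm, ?_⟩
  rw [← map_leavesFinset φ, steklovEig_map_iso]

end Iso

section Leaves

variable {V : Type*} [Fintype V] {G : SimpleGraph V}

lemma mem_leavesFinset {x : V} : x ∈ leavesFinset G ↔ ∃! y, G.Adj x y := by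
  simp only [leavesFinset, Finset.mem_filter, Finset.mem_univ, true_and,
    SimpleGraph.degree_eq_one_iff_existsUnique_adj]

lemma one_lt_card_leavesFinset [Nontrivial V] (hG : G.IsTree) : 1 < (leavesFinset G).card := by
  obtain ⟨u, v, huv, hu, hv⟩ := hG.exists_ne_and_degree_eq_one
  exact Finset.one_lt_card.2 ⟨u, by simpa [leavesFinset], v, by simpa [leavesFinset], huv⟩

end Leaves

section ParentGraph

variable {V : Type*}

/-- The graph joining every vertex `x` to its parent `p x`; a root is encoded by `p x = x`. -/
def parentGraph (p : V → V) : SimpleGraph V :=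
  SimpleGraph.fromRel fun x y => p x = y

/-- `p` is the parent map of a tree with root `o`; the function `depth`, which decreases towards
the root, certifies that iterating `p` leads every vertex to `o`. -/
structure IsParentMap (p : V → V) (o : V) (depth : V → ℕ) : Prop where
  map_root : p o = o
  depth_map_lt : ∀ x, x ≠ o → depth (p x) < depth x

variable {p : V → V} {o : V} {depth : V → ℕ}

lemma parentGraph_adj {x y : V} : (parentGraph p).Adj x y ↔ x ≠ y ∧ (p x = y ∨ p y = x) :=
  SimpleGraph.fromRel_adj _ x y

lemma parentGraph_adj_map {x : V} (hx : p x ≠ x) : (parentGraph p).Adj x (p x) :=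
  parentGraph_adj.2 ⟨hx.symm, Or.inl rfl⟩

lemma IsParentMap.map_ne (h : IsParentMap p o depth) {x : V} (hx : x ≠ o) : p x ≠ x :=
  fun hpx => (h.depth_map_lt x hx).ne (congrArg depth hpx)

lemma IsParentMap.map_eq_of_map_map_eq (h : IsParentMap p o depth) {x : V} (hx : p (p x) = x) :
    p x = x := by
  by_cases hxo : x = o
  · rw [hxo, h.map_root]
  by_cases hpo : p x = o
  · exact absurd (by rw [← hx, hpo, h.map_root]) hxo
  · have := h.depth_map_lt x hxo
    have := h.depth_map_lt (p x) hpo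
    rw [hx] at this
    omega

lemma IsParentMap.connected_parentGraph (h : IsParentMap p o depth) :
    (parentGraph p).Connected := by
  have hroot (x : V) : (parentGraph p).Reachable x o := by
    induction hd : depth x using Nat.strong_induction_on generalizing x with
    | _ d ih =>
      by_cases hx : x = o
      · rw [hx]
      · exact (parentGraph_adj_map (h.map_ne hx)).reachable.trans
          (ih _ (hd ▸ h.depth_map_lt x hx) _ rfl)
  have : Nonempty V := ⟨o⟩
  exact ⟨fun x y => (hroot x).trans (hroot y).symm⟩

lemma edgeSet_parentGraph_subset (hp : p o = o) :
    (parentGraph p).edgeSet ⊆ (fun x => s(x, p x)) '' {o}ᶜ := by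
  intro e
  induction e using Sym2.ind with
  | _ x y =>
    rw [SimpleGraph.mem_edgeSet, parentGraph_adj]
    rintro ⟨hxy, rfl | rfl⟩
    · exact ⟨x, fun hx : x = o => hxy (by rw [hx, hp]), rfl⟩
    · exact ⟨y, fun hy : y = o => hxy (by rw [hy, hp]), Sym2.eq_swap⟩

lemma IsParentMap.isTree_parentGraph [Finite V] (h : IsParentMap p o depth) :
    (parentGraph p).IsTree := by
  have hconn := h.connected_parentGraph
  refine SimpleGraph.isTree_iff_connected_and_card.2
    ⟨hconn, le_antisymm ?_ hconn.card_vert_le_card_edgeSet_add_one⟩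
  calc Nat.card (parentGraph p).edgeSet + 1
      ≤ ({o}ᶜ : Set V).ncard + 1 := by
        gcongr
        rw [Nat.card_coe_set_eq]
        exact (Set.ncard_le_ncard (edgeSet_parentGraph_subset h.map_root)).trans
          Set.ncard_image_le
    _ = Nat.card V := by
        rw [← Set.ncard_add_ncard_compl {o}, Set.ncard_singleton, add_comm]

lemma dirichletEnergy_parentGraph [Fintype V] (hp : ∀ x, p (p x) = x → p x = x) (f : V → ℝ) :
    dirichletEnergy (parentGraph p) f = ∑ x, (f x - f (p x)) ^ 2 := by
  have hsplit (x y : V) : (if (parentGraph p).Adj x y then (f x - f y) ^ 2 else 0) =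
      (if p x = y then (f x - f y) ^ 2 else 0) + if p y = x then (f y - f x) ^ 2 else 0 := by
    rw [parentGraph_adj]
    by_cases hxy : x = y
    · simp [hxy]
    by_cases hx : p x = y <;> by_cases hy : p y = x
    · exact absurd (hp x (by rw [hx, hy])) (by rw [hx]; exact Ne.symm hxy)
    all_goals simp [hxy, hx, hy, sub_sq_comm (f x) (f y)]
  have hparent : ∑ x, ∑ y, (if p x = y then (f x - f y) ^ 2 else 0) =
      ∑ x, (f x - f (p x)) ^ 2 := by simp
  unfold dirichletEnergy
  simp only [hsplit, Finset.sum_add_distrib]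
  rw [hparent, Finset.sum_comm, hparent]
  ring

lemma abs_sub_le_dist {G : SimpleGraph V} (hG : G.Connected) {φ : V → ℤ}
    (hφ : ∀ x y, G.Adj x y → |φ x - φ y| ≤ 1) (x y : V) : |φ x - φ y| ≤ G.dist x y := by
  obtain ⟨w, hw⟩ := hG.exists_walk_length_eq_dist x y
  rw [← hw]
  clear hw
  induction w with
  | nil => simp
  | cons hadj w ih =>
    rw [SimpleGraph.Walk.length_cons, Nat.cast_succ, add_comm]
    exact (abs_sub_le _ _ _).trans (add_le_add (hφ _ _ hadj) ih)

lemma IsParentMap.abs_sub_le_dist (h : IsParentMap p o depth) {φ : V → ℤ}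
    (hφ : ∀ x, |φ x - φ (p x)| ≤ 1) (x y : V) : |φ x - φ y| ≤ (parentGraph p).dist x y := by
  refine _root_.abs_sub_le_dist h.connected_parentGraph (fun x y hxy => ?_) x y
  obtain ⟨-, rfl | rfl⟩ := parentGraph_adj.1 hxy
  · exact hφ x
  · exact abs_sub_comm (φ y) _ ▸ hφ y

end ParentGraph

section Spider

variable {ι : Type*} (ℓ : ι → ℕ)

/-- The vertices of the spider with legs of lengths `ℓ i`: the centre `none` and, on leg `i`, the
vertices `some ⟨i, j⟩` at distance `j + 1` from the centre. Legs may have length `0`. -/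
abbrev SpiderVertex : Type _ := Option (Σ i, Fin (ℓ i))

variable {ℓ}

/-- The vertex of leg `i` at distance `j` from the centre. -/
def legVertex (i : ι) : Fin (ℓ i + 1) → SpiderVertex ℓ :=
  Fin.cases none fun j => some ⟨i, j⟩

/-- The foot of leg `i`: its last vertex, which is the centre when the leg has length `0`. -/
def legFoot (i : ι) : SpiderVertex ℓ :=
  legVertex i (Fin.last (ℓ i))

/-- The parent map that defines the spider, rooted at its centre. -/
def spiderParent : SpiderVertex ℓ → SpiderVertex ℓ
  | none => none
  | some ⟨i, j⟩ => legVertex i j.castSucc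

/-- The distance of a vertex of the spider to the centre. -/
def spiderDepth : SpiderVertex ℓ → ℕ
  | none => 0
  | some ⟨_, j⟩ => j + 1

variable (ℓ) in
/-- The spider (starlike tree) with legs of lengths `ℓ i`. -/
def spider : SimpleGraph (SpiderVertex ℓ) :=
  parentGraph spiderParent

@[simp]
lemma spiderDepth_legVertex (i : ι) (j : Fin (ℓ i + 1)) :
    spiderDepth (legVertex i j) = j := by
  cases j using Fin.cases <;> rfl

lemma isParentMap_spiderParent :
    IsParentMap (spiderParent (ℓ := ℓ)) none spiderDepth where
  map_root := rfl
  depth_map_lt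
    | none, h => absurd rfl h
    | some ⟨i, j⟩, _ => by
      rw [spiderParent, spiderDepth_legVertex, spiderDepth, Fin.val_castSucc]
      exact Nat.lt_succ_self _

lemma spider_adj_legVertex (i : ι) (j : Fin (ℓ i)) :
    (spider ℓ).Adj (legVertex i j.succ) (legVertex i j.castSucc) :=
  parentGraph_adj_map (isParentMap_spiderParent.map_ne (Option.some_ne_none _))

lemma spider_connected : (spider ℓ).Connected :=
  isParentMap_spiderParent.connected_parentGraph

lemma spider_isTree [Finite ι] : (spider ℓ).IsTree :=
  isParentMap_spiderParent.isTree_parentGraph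

lemma card_spiderVertex [Fintype ι] : Fintype.card (SpiderVertex ℓ) = ∑ i, ℓ i + 1 := by
  simp

lemma dirichletEnergy_spider [Fintype ι] (f : SpiderVertex ℓ → ℝ) :
    dirichletEnergy (spider ℓ) f =
      ∑ i, ∑ j : Fin (ℓ i), (f (legVertex i j.succ) - f (legVertex i j.castSucc)) ^ 2 := by
  rw [spider, dirichletEnergy_parentGraph
    (fun _ => isParentMap_spiderParent.map_eq_of_map_map_eq), Fintype.sum_option,
    Fintype.sum_sigma]
  simp [spiderParent, legVertex]

lemma exists_legVertex_eq [Nonempty ι] : ∀ x : SpiderVertex ℓ, ∃ i j, legVertex i j = x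
  | none => ⟨Classical.arbitrary ι, 0, rfl⟩
  | some ⟨i, j⟩ => ⟨i, j.succ, rfl⟩

lemma dist_legVertex_le (i : ι) {j k : Fin (ℓ i + 1)} (hkj : k ≤ j) :
    (spider ℓ).dist (legVertex i j) (legVertex i k) ≤ j - k := by
  induction j using Fin.induction with
  | zero => simp [Fin.le_zero_iff.1 hkj]
  | succ j ih =>
    obtain rfl | hlt := hkj.eq_or_lt
    · simp
    have hk : k ≤ j.castSucc := Fin.le_castSucc_iff.2 hlt
    have htri := spider_connected.dist_triangle (u := legVertex i j.succ)
      (v := legVertex i j.castSucc) (w := legVertex i k)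
    rw [SimpleGraph.dist_eq_one_iff_adj.2 (spider_adj_legVertex i j)] at htri
    have := ih hk
    have : (k : ℕ) ≤ j := hk
    simp only [Fin.val_succ, Fin.val_castSucc] at *
    omega

lemma dist_legVertex_le_add (i i' : ι) (j : Fin (ℓ i + 1)) (j' : Fin (ℓ i' + 1)) :
    (spider ℓ).dist (legVertex i j) (legVertex i' j') ≤ j + j' :=
  calc (spider ℓ).dist (legVertex i j) (legVertex i' j')
      ≤ (spider ℓ).dist (legVertex i j) none + (spider ℓ).dist none (legVertex i' j') :=
        spider_connected.dist_triangle
    _ ≤ j + j' := by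
        rw [SimpleGraph.dist_comm (u := none)]
        exact add_le_add (dist_legVertex_le i (Fin.zero_le j))
          (dist_legVertex_le i' (Fin.zero_le j'))

lemma dist_legFoot {i i' : ι} (hne : i ≠ i') :
    (spider ℓ).dist (legFoot i) (legFoot i') = ℓ i + ℓ i' := by
  refine le_antisymm (dist_legVertex_le_add i i' _ _) ?_
  -- The depth, with its sign reversed off leg `i`, is `1`-Lipschitz and separates the two feet.
  let φ : SpiderVertex ℓ → ℤ
    | none => 0
    | some ⟨k, j⟩ => if k = i then j + 1 else -(j + 1)
  have hφ_leg (k : ι) (j : Fin (ℓ k + 1)) : φ (legVertex k j) = if k = i then (j : ℤ) else -j := by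
    cases j using Fin.cases <;> simp [φ, legVertex]
  have hφ (x : SpiderVertex ℓ) : |φ x - φ (spiderParent x)| ≤ 1 := by
    rcases x with _ | ⟨k, j⟩
    · simp [spiderParent]
    · rw [spiderParent, hφ_leg]
      by_cases hk : k = i <;> simp [φ, hk]
  have h := isParentMap_spiderParent.abs_sub_le_dist hφ (legFoot i) (legFoot i')
  rw [legFoot, legFoot, hφ_leg, hφ_leg, if_pos rfl, if_neg hne.symm, sub_neg_eq_add] at h
  exact_mod_cast (le_abs_self _).trans h

theorem diam_spider [Finite ι] {i₀ i₁ : ι} (hne : i₀ ≠ i₁)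
    (hmax : ∀ i j, i ≠ j → ℓ i + ℓ j ≤ ℓ i₀ + ℓ i₁) :
    (spider ℓ).diam = ℓ i₀ + ℓ i₁ := by
  have hle (i : ι) : ℓ i ≤ ℓ i₀ + ℓ i₁ := by
    obtain rfl | hi := eq_or_ne i i₀
    · exact Nat.le_add_right _ _
    · exact (Nat.le_add_right _ _).trans (hmax i i₀ hi)
  refine le_antisymm ?_ ?_
  · have : Nonempty ι := ⟨i₀⟩
    obtain ⟨x, y, hxy⟩ := (spider ℓ).exists_dist_eq_diam
    obtain ⟨i, j, rfl⟩ := exists_legVertex_eq x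
    obtain ⟨i', j', rfl⟩ := exists_legVertex_eq y
    rw [← hxy]
    obtain rfl | hi := eq_or_ne i i'
    · refine le_trans ?_ (hle i)
      rcases le_total j' j with h | h
      · exact (dist_legVertex_le i h).trans (by omega)
      · rw [SimpleGraph.dist_comm]
        exact (dist_legVertex_le i h).trans (by omega)
    · exact (dist_legVertex_le_add i i' j j').trans
        ((add_le_add j.is_le j'.is_le).trans (hmax i i' hi))
  · rw [← dist_legFoot hne]
    exact SimpleGraph.dist_le_diam
      (SimpleGraph.connected_iff_ediam_ne_top.1 spider_connected)

lemma exists_legFoot_eq_of_mem_leavesFinset [Fintype ι] [Nontrivial ι] {x : SpiderVertex ℓ}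
    (hx : x ∈ leavesFinset (spider ℓ)) : ∃ i, legFoot i = x := by
  have hunique {y z} (hy : (spider ℓ).Adj x y) (hz : (spider ℓ).Adj x z) : y = z :=
    (mem_leavesFinset.1 hx).unique hy hz
  rcases x with _ | ⟨i, j⟩
  · by_contra! hfoot
    have hpos (i : ι) : 0 < ℓ i := Nat.pos_of_ne_zero fun h => hfoot i (by
      rw [legFoot, show Fin.last (ℓ i) = 0 from Fin.ext h]; rfl)
    obtain ⟨i, i', hne⟩ := exists_pair_ne ι
    have h := hunique (spider_adj_legVertex i ⟨0, hpos i⟩).symm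
      (spider_adj_legVertex i' ⟨0, hpos i'⟩).symm
    exact hne (congrArg Sigma.fst (Option.some_injective _ h))
  · refine ⟨i, ?_⟩
    by_contra hfoot
    have hlt : (j : ℕ) + 1 < ℓ i := lt_of_le_of_ne j.is_lt fun h => hfoot (by
      rw [legFoot, show Fin.last (ℓ i) = j.succ from Fin.ext h.symm]; rfl)
    have h := hunique (spider_adj_legVertex i ⟨j + 1, hlt⟩).symm (spider_adj_legVertex i j)
    have := congrArg spiderDepth h
    simp at this
    omega

-- Not an equality: the foot of a leg of length `0` is the centre, which need not be a leaf.
lemma sum_leavesFinset_spider_le [Fintype ι] [Nontrivial ι] {g : SpiderVertex ℓ → ℝ}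
    (hg : 0 ≤ g) : ∑ x ∈ leavesFinset (spider ℓ), g x ≤ ∑ i, g (legFoot i) :=
  calc ∑ x ∈ leavesFinset (spider ℓ), g x
      ≤ ∑ x ∈ Finset.univ.image legFoot, g x := by
        refine Finset.sum_le_sum_of_subset_of_nonneg (fun x hx => ?_) fun x _ _ => hg x
        simpa using exists_legFoot_eq_of_mem_leavesFinset hx
    _ ≤ ∑ i, g (legFoot i) := Finset.sum_image_le_of_nonneg fun i _ => hg i

end Spider

section SpiderEigenvalue

lemma sq_sub_le_mul_sum_sq_sub {m : ℕ} (y : Fin (m + 1) → ℝ) :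
    (y (Fin.last m) - y 0) ^ 2 ≤ m * ∑ j : Fin m, (y j.succ - y j.castSucc) ^ 2 := by
  have htelescope : ∑ j : Fin m, (y j.succ - y j.castSucc) = y (Fin.last m) - y 0 := by
    rw [Finset.sum_sub_distrib, sub_eq_sub_iff_add_eq_add, add_comm, ← Fin.sum_univ_succ,
      add_comm (y _), ← Fin.sum_univ_castSucc]
  simpa [htelescope] using
    sq_sum_le_card_mul_sum_sq (s := Finset.univ) (f := fun j : Fin m => y j.succ - y j.castSucc)

variable {s l a z E : ℝ}

lemma mul_sq_sub_le_of_mul_lt_one (hl : 0 ≤ l) (hE : 0 ≤ E) (haz : (a - z) ^ 2 ≤ l * E)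
    (hsl : s * l < 1) : s * a ^ 2 - s * z ^ 2 * (1 - s * l)⁻¹ ≤ E := by
  obtain rfl | hl := hl.eq_or_lt
  · have : a = z := sub_eq_zero.1 (pow_eq_zero_iff two_ne_zero |>.1
      ((haz.trans_eq (zero_mul E)).antisymm (sq_nonneg _)))
    simpa [this] using hE
  have hpos : 0 < 1 - s * l := sub_pos.2 hsl
  calc s * a ^ 2 - s * z ^ 2 * (1 - s * l)⁻¹
      = (a - z) ^ 2 / l - ((1 - s * l) * a - z) ^ 2 / (l * (1 - s * l)) := by
        field_simp; ring
    _ ≤ (a - z) ^ 2 / l := sub_le_self _ (by positivity)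
    _ ≤ E := (div_le_iff₀' hl).2 haz

lemma mul_sq_sub_le_of_mul_eq (hl : 0 < l) (haz : (a - z) ^ 2 ≤ l * E)
    (hz : (1 - s * l) * a = z) : s * a ^ 2 - s * z ^ 2 * (1 - s * l)⁻¹ ≤ E := by
  subst hz
  calc s * a ^ 2 - s * ((1 - s * l) * a) ^ 2 * (1 - s * l)⁻¹
      = (a - (1 - s * l) * a) ^ 2 / l := by field_simp; ring
    _ ≤ E := (div_le_iff₀' hl).2 haz

variable {ι : Type*} [Fintype ι] {ℓ : ι → ℕ} {i₀ : ι}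

lemma mul_sum_sq_legFoot_le_dirichletEnergy (h₀ : 1 < s * ℓ i₀) (h : ∀ i ≠ i₀, s * ℓ i < 1)
    (hsum : ∑ i, (1 - s * ℓ i)⁻¹ ≤ 0) {f : SpiderVertex ℓ → ℝ}
    (hf : (1 - s * ℓ i₀) * f (legFoot i₀) = f none) :
    s * ∑ i, f (legFoot i) ^ 2 ≤ dirichletEnergy (spider ℓ) f := by
  have hs : 0 ≤ s := (pos_of_mul_pos_left (one_pos.trans h₀) (Nat.cast_nonneg _)).le
  have hleg (i : ι) : s * f (legFoot i) ^ 2 - s * f none ^ 2 * (1 - s * ℓ i)⁻¹ ≤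
      ∑ j : Fin (ℓ i), (f (legVertex i j.succ) - f (legVertex i j.castSucc)) ^ 2 := by
    have hE := sq_sub_le_mul_sum_sq_sub fun j => f (legVertex i j)
    obtain rfl | hi := eq_or_ne i i₀
    · exact mul_sq_sub_le_of_mul_eq (pos_of_mul_pos_right (one_pos.trans h₀) hs) hE hf
    · exact mul_sq_sub_le_of_mul_lt_one (Nat.cast_nonneg _)
        (Finset.sum_nonneg fun _ _ => sq_nonneg _) hE (h i hi)
  calc s * ∑ i, f (legFoot i) ^ 2
      ≤ s * ∑ i, f (legFoot i) ^ 2 - s * f none ^ 2 * ∑ i, (1 - s * ℓ i)⁻¹ :=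
        le_sub_self_iff _ |>.2 (mul_nonpos_of_nonneg_of_nonpos (by positivity) hsum)
    _ = ∑ i, (s * f (legFoot i) ^ 2 - s * f none ^ 2 * (1 - s * ℓ i)⁻¹) := by
        rw [Finset.mul_sum, Finset.mul_sum, Finset.sum_sub_distrib]
    _ ≤ dirichletEnergy (spider ℓ) f := by
        rw [dirichletEnergy_spider]
        exact Finset.sum_le_sum fun i _ => hleg i

theorem le_steklovEig_spider [Nontrivial ι] (h₀ : 1 < s * ℓ i₀) (h : ∀ i ≠ i₀, s * ℓ i < 1)
    (hsum : ∑ i, (1 - s * ℓ i)⁻¹ ≤ 0) :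
    s ≤ steklovEig (spider ℓ) (leavesFinset (spider ℓ)) 2 := by
  have hℓ : 0 < ℓ i₀ := Nat.pos_of_ne_zero fun h0 => by norm_num [h0] at h₀
  have hs : 0 ≤ s := (pos_of_mul_pos_left (one_pos.trans h₀) (Nat.cast_nonneg _)).le
  have : Nontrivial (SpiderVertex ℓ) := ⟨none, some ⟨i₀, 0, hℓ⟩, nofun⟩
  let L : (SpiderVertex ℓ → ℝ) →ₗ[ℝ] ℝ :=
    (1 - s * ℓ i₀) • LinearMap.proj (legFoot i₀) - LinearMap.proj none
  refine le_steklovEig_of_forall_map_eq_zero L (by simp) (one_lt_card_leavesFinset spider_isTree)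
    fun f hLf => ?_
  calc s * ∑ x ∈ leavesFinset (spider ℓ), f x ^ 2
      ≤ s * ∑ i, f (legFoot i) ^ 2 :=
        mul_le_mul_of_nonneg_left (sum_leavesFinset_spider_le fun x => sq_nonneg (f x)) hs
    _ ≤ dirichletEnergy (spider ℓ) f :=
        mul_sum_sq_legFoot_le_dirichletEnergy h₀ h hsum (sub_eq_zero.1 hLf)

end SpiderEigenvalue

section LowerRoot

/-- The smaller root of `a x² + b x + c` when `0 < a` and the discriminant is nonnegative;
`C⁻` has this form. -/
noncomputable def lowerRoot (a b c : ℝ) : ℝ :=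
  (-b - √(discrim a b c)) / (2 * a)

variable {a b c x y : ℝ}

lemma sq_eq_discrim_add (a b c x : ℝ) :
    (2 * a * x + b) ^ 2 = discrim a b c + 4 * a * (a * x ^ 2 + b * x + c) := by
  rw [discrim]; ring

lemma two_mul_lowerRoot_add (ha : a ≠ 0) : 2 * a * lowerRoot a b c + b = -√(discrim a b c) := by
  rw [lowerRoot]; field_simp; ring

lemma sq_le_discrim (ha : 0 < a) (hx : a * x ^ 2 + b * x + c ≤ 0) :
    (2 * a * x + b) ^ 2 ≤ discrim a b c := by
  rw [sq_eq_discrim_add]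
  exact add_le_of_nonpos_right (mul_nonpos_of_nonneg_of_nonpos (by positivity) hx)

lemma eval_lowerRoot (ha : 0 < a) (hx : a * x ^ 2 + b * x + c ≤ 0) :
    a * lowerRoot a b c ^ 2 + b * lowerRoot a b c + c = 0 := by
  have h := sq_eq_discrim_add a b c (lowerRoot a b c)
  rw [two_mul_lowerRoot_add ha.ne', neg_sq,
    Real.sq_sqrt ((sq_nonneg _).trans (sq_le_discrim ha hx)), left_eq_add] at h
  exact (mul_eq_zero.1 h).resolve_left (by positivity)

lemma lowerRoot_le (ha : 0 < a) (hx : a * x ^ 2 + b * x + c ≤ 0) : lowerRoot a b c ≤ x := by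
  have h := Real.neg_sqrt_le_of_sq_le (sq_le_discrim ha hx)
  rw [← two_mul_lowerRoot_add ha.ne'] at h
  exact le_of_mul_le_mul_left (le_of_add_le_add_right h) (by positivity)

lemma lt_lowerRoot (ha : 0 < a) (hyx : y < x) (hx : a * x ^ 2 + b * x + c ≤ 0)
    (hy : 0 < a * y ^ 2 + b * y + c) : y < lowerRoot a b c := by
  by_contra! hle
  refine hy.not_ge ?_
  have hdiscrim := (sq_nonneg _).trans (sq_le_discrim ha hx)
  have hlower : -√(discrim a b c) ≤ 2 * a * y + b := by
    rw [← two_mul_lowerRoot_add ha.ne']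
    gcongr
  have hupper : 2 * a * y + b ≤ √(discrim a b c) :=
    le_trans (by gcongr) (Real.le_sqrt_of_sq_le (sq_le_discrim ha hx))
  have hsq := (Real.sq_le hdiscrim).2 ⟨hlower, hupper⟩
  rw [sq_eq_discrim_add, add_le_iff_nonpos_right] at hsq
  exact nonpos_of_mul_nonpos_right hsq (by positivity)

end LowerRoot

section SecularEquation

/-- The numerator of `1 / (1 - t (r + 1)) + 1 / (1 - t r) + (b - 2) / (1 - t c)`, which is the sum
of `1 / (1 - t ℓ)` over the legs of the spider with legs `r + 1`, `r` and `b - 2` times `c`. -/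
def secularNumerator (r b c t : ℝ) : ℝ :=
  (1 - t * r) * (1 - t * c) + (1 - t * (r + 1)) * (1 - t * c) +
    (b - 2) * ((1 - t * (r + 1)) * (1 - t * r))

variable {r b c : ℝ}

lemma secularNumerator_eq (r b c t : ℝ) :
    secularNumerator r b c t = ((2 * r + 1) * c + (b - 2) * (r ^ 2 + r)) * t ^ 2 +
      -((2 * r + 1) * (b - 1) + 2 * c) * t + b := by
  rw [secularNumerator]; ring

lemma Cminus_eq_lowerRoot (r b c : ℕ) :
    Cminus r b c = lowerRoot ((2 * r + 1) * c + (b - 2) * (r ^ 2 + r))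
      (-((2 * r + 1) * (b - 1) + 2 * c)) b := by
  rw [Cminus, lowerRoot, discrim]
  congr 1
  · congr 1
    · ring
    · congr 1; ring
  · ring

lemma secularNumerator_two_div_nonpos (hr : 0 ≤ r) (hb : 2 ≤ b) :
    secularNumerator r b c (2 / (2 * r + 1)) ≤ 0 :=
  calc secularNumerator r b c (2 / (2 * r + 1))
      = -((b - 2) / (2 * r + 1) ^ 2) := by rw [secularNumerator]; field_simp; ring
    _ ≤ 0 := neg_nonpos.2 (div_nonneg (sub_nonneg.2 hb) (sq_nonneg _))

lemma secularNumerator_one_div_pos (hr : 0 ≤ r) (hcr : c ≤ r) :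
    0 < secularNumerator r b c (1 / (r + 1)) :=
  calc 0 < (r + 1 - c) / (r + 1) ^ 2 := div_pos (by linarith) (by positivity)
    _ = secularNumerator r b c (1 / (r + 1)) := by rw [secularNumerator]; field_simp; ring

lemma secularNumerator_eq_mul {t : ℝ} (h₁ : 1 - t * (r + 1) ≠ 0) (h₂ : 1 - t * r ≠ 0)
    (h₃ : 1 - t * c ≠ 0) :
    (1 - t * (r + 1))⁻¹ + (1 - t * r)⁻¹ + (b - 2) * (1 - t * c)⁻¹ =
      secularNumerator r b c t / ((1 - t * (r + 1)) * (1 - t * r) * (1 - t * c)) := by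
  rw [secularNumerator]; field_simp

end SecularEquation

section CminusBounds

variable {r b c : ℕ}

lemma secularLeading_pos (hb : 2 ≤ b) (hc : 1 ≤ c) :
    (0 : ℝ) < (2 * r + 1) * c + (b - 2) * (r ^ 2 + r) := by
  have hb' : (0 : ℝ) ≤ b - 2 := sub_nonneg.2 (by exact_mod_cast hb)
  positivity

lemma secularNumerator_Cminus (hb : 2 ≤ b) (hc : 1 ≤ c) :
    secularNumerator r b c (Cminus r b c) = 0 := by
  rw [secularNumerator_eq, Cminus_eq_lowerRoot]
  refine eval_lowerRoot (x := 2 / (2 * r + 1)) (secularLeading_pos hb hc) ?_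
  rw [← secularNumerator_eq]
  exact secularNumerator_two_div_nonpos r.cast_nonneg (by exact_mod_cast hb)

lemma Cminus_le_two_div (hb : 2 ≤ b) (hc : 1 ≤ c) : Cminus r b c ≤ 2 / (2 * r + 1) := by
  rw [Cminus_eq_lowerRoot]
  refine lowerRoot_le (secularLeading_pos hb hc) ?_
  rw [← secularNumerator_eq]
  exact secularNumerator_two_div_nonpos r.cast_nonneg (by exact_mod_cast hb)

lemma one_div_lt_Cminus (hb : 2 ≤ b) (hc : 1 ≤ c) (hcr : c ≤ r) :
    1 / (r + 1 : ℝ) < Cminus r b c := by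
  rw [Cminus_eq_lowerRoot]
  refine lt_lowerRoot (x := 2 / (2 * r + 1)) (secularLeading_pos hb hc) ?_ ?_ ?_
  · rw [div_lt_div_iff₀ (by positivity) (by positivity)]; linarith
  · rw [← secularNumerator_eq]
    exact secularNumerator_two_div_nonpos r.cast_nonneg (by exact_mod_cast hb)
  · rw [← secularNumerator_eq]
    exact secularNumerator_one_div_pos r.cast_nonneg (by exact_mod_cast hcr)

end CminusBounds

section LongPair

variable {ι : Type*}

/-- The leg lengths of the test spider: `r + 1` and `r`, which fix its diameter, then the short
legs `m`. -/
abbrev longPairLegs (r : ℕ) (m : ι → ℕ) : Fin 2 ⊕ ι → ℕ :=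
  Sum.elim ![r + 1, r] m

variable {r c : ℕ} {m : ι → ℕ}

lemma diam_spider_longPairLegs [Finite ι] (hm : ∀ i, m i ≤ r) :
    (spider (longPairLegs r m)).diam = 2 * r + 1 := by
  have hle (i : Fin 2 ⊕ ι) (hi : i ≠ Sum.inl 0) : longPairLegs r m i ≤ r := by
    match i with
    | .inl 0 => exact absurd rfl hi
    | .inl 1 => exact le_rfl
    | .inr i => exact hm i
  have hle_succ (i : Fin 2 ⊕ ι) : longPairLegs r m i ≤ r + 1 := by
    obtain rfl | hi := eq_or_ne i (Sum.inl 0)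
    · exact le_rfl
    · exact (hle i hi).trans r.le_succ
  rw [diam_spider (i₀ := Sum.inl 0) (i₁ := Sum.inl 1) (by simp) fun i j hij => ?_]
  · simp; omega
  · obtain rfl | hi := eq_or_ne i (Sum.inl 0)
    · exact add_le_add le_rfl (hle j hij.symm)
    · exact (add_comm _ _).trans_le (add_le_add (hle_succ j) (hle i hi))

variable [Fintype ι]

lemma card_spiderVertex_longPairLegs :
    Fintype.card (SpiderVertex (longPairLegs r m)) = 2 * r + 2 + ∑ i, m i := by
  rw [card_spiderVertex, Fintype.sum_sum_type, Fin.sum_univ_two]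
  simp; omega

lemma sum_inv_one_sub_mul_le {s : ℝ} (hs : 0 ≤ s) (hsc : s * c < 1) (hm : ∀ i, m i ≤ c) :
    ∑ i, (1 - s * m i)⁻¹ ≤ Fintype.card ι * (1 - s * c)⁻¹ := by
  rw [← nsmul_eq_mul]
  refine Finset.sum_le_card_nsmul _ _ _ fun i _ => ?_
  exact inv_anti₀ (sub_pos.2 hsc) (by gcongr; exact_mod_cast hm i)

theorem Cminus_le_steklovEig_spider (hc : 1 ≤ c) (hcr : c ≤ r) (hm : ∀ i, m i ≤ c) :
    Cminus r (Fintype.card ι + 2) c ≤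
      steklovEig (spider (longPairLegs r m)) (leavesFinset (spider (longPairLegs r m))) 2 := by
  set s := Cminus r (Fintype.card ι + 2) c
  have hb : 2 ≤ Fintype.card ι + 2 := Nat.le_add_left _ _
  have hs : 0 < s := lt_trans (by positivity) (one_div_lt_Cminus hb hc hcr)
  have hlong : 1 < s * (r + 1 : ℕ) := by
    rw [← div_lt_iff₀ (by positivity)]
    exact_mod_cast one_div_lt_Cminus hb hc hcr
  have hr : s * r < 1 := by
    have := (le_div_iff₀ (by positivity)).1 (Cminus_le_two_div (r := r) hb hc)
    linarith
  have hnontrivial : Nontrivial (Fin 2 ⊕ ι) := Sum.inl_injective.nontrivial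
  have hle {k : ℕ} (hk : k ≤ r) : s * k < 1 := hr.trans_le' (by gcongr)
  refine le_steklovEig_spider (i₀ := Sum.inl 0) hlong (fun i hi => ?_) ?_
  · match i with
    | .inl 0 => exact absurd rfl hi
    | .inl 1 => exact hr
    | .inr i => exact hle ((hm i).trans hcr)
  · calc ∑ i, (1 - s * longPairLegs r m i)⁻¹
        = (1 - s * (r + 1))⁻¹ + (1 - s * r)⁻¹ + ∑ i, (1 - s * m i)⁻¹ := by
          simp [Fintype.sum_sum_type]
      _ ≤ (1 - s * (r + 1))⁻¹ + (1 - s * r)⁻¹ +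
            ((Fintype.card ι + 2 : ℕ) - 2) * (1 - s * c)⁻¹ := by
          gcongr
          simpa using sum_inv_one_sub_mul_le hs.le (hle hcr) hm
      _ = 0 := by
          push_cast at hlong
          rw [secularNumerator_eq_mul (sub_neg.2 hlong).ne (sub_pos.2 hr).ne'
            (sub_pos.2 (hle hcr)).ne', secularNumerator_Cminus hb hc, zero_div]

end LongPair

lemma exists_le_sum_eq {ι : Type*} [Fintype ι] {g : ι → ℕ} {m : ℕ} (hm : m ≤ ∑ i, g i) :
    ∃ f ≤ g, ∑ i, f i = m := by
  induction m with
  | zero => exact ⟨0, fun i => (g i).zero_le, by simp⟩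
  | succ m ih =>
    obtain ⟨f, hfg, rfl⟩ := ih (Nat.le_of_succ_le hm)
    obtain ⟨i, -, hi⟩ := Finset.exists_lt_of_sum_lt (Nat.lt_of_succ_le hm)
    refine ⟨f + Pi.single i 1, fun j => ?_, by simp [Finset.sum_add_distrib]⟩
    obtain rfl | hj := eq_or_ne j i
    · simpa using hi
    · simpa [hj] using hfg j

theorem stmt8_general (r b c n : ℕ) (hb : 2 ≤ b) (hc1 : 1 ≤ c) (hc2 : c ≤ r)
    (hn1 : 2 * r + 2 ≤ n) (hn2 : n ≤ 2 * r + (b - 2) * c + 2) :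
    Cminus r b c ≤ sigmaTildeMax (2 * r + 1) n := by
  obtain ⟨k, rfl⟩ := Nat.exists_eq_add_of_le' hb
  obtain ⟨m, hmc, hsum⟩ : ∃ m ≤ fun _ : Fin k => c, ∑ i, m i = n - (2 * r + 2) :=
    exists_le_sum_eq (by simp at hn2 ⊢; omega)
  have hcard : Fintype.card (SpiderVertex (longPairLegs r m)) = n := by
    rw [card_spiderVertex_longPairLegs, hsum, Nat.add_sub_cancel' hn1]
  have hdiam : (spider (longPairLegs r m)).diam = 2 * r + 1 :=
    diam_spider_longPairLegs fun i => (hmc i).trans hc2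
  have hbound := Cminus_le_steklovEig_spider hc1 hc2 hmc
  rw [Fintype.card_fin] at hbound
  rw [← hdiam, ← hcard]
  exact hbound.trans (steklovEig_two_le_sigmaTildeMax spider_isTree)

/-- Let `D = 2r + 1 ≥ 5` be an odd integer, and let `b ≥ 2`, `1 ≤ c ≤ r`,
and `n` be integers with `2r + 2 ≤ n ≤ 2r + (b-2)c + 2`. Then `σ̃_{2,max}(D,n) ≥ C⁻(r,b,c)`. -/
theorem stmt8 (r b c n : ℕ) (hr : 2 ≤ r) (hb : 2 ≤ b) (hc1 : 1 ≤ c) (hc2 : c ≤ r)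
    (hn1 : 2 * r + 2 ≤ n) (hn2 : n ≤ 2 * r + (b - 2) * c + 2) :
    Cminus r b c ≤ sigmaTildeMax (2 * r + 1) n :=
  stmt8_general r b c n hb hc1 hc2 hn1 hn2
end

section
/- Let b₁, b₂, r ≥ 1 be integers, and let T = CG(b₁,b₂,r) be the crab graph with leaves as boundary. Then the Steklov eigenvalues of T are σ_1 = 0, σ_2 = (b₁+b₂)/(b₁b₂ + r(b₁+b₂)), and σ_k = 1/r for all 3 ≤ k ≤ b₁+b₂. -/
open scoped BigOperators
open Classical

/-- The crab graph `CG(b₁,b₂,r)`: an edge `u₀v₀` (`u₀ = Sum.inr (Sum.inr false)`,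
`v₀ = Sum.inr (Sum.inr true)`) with `b₁` paths of length `r` attached at `u₀` and
`b₂` paths of length `r` attached at `v₀`. -/
def crabGraph (b₁ b₂ r : ℕ) :
    SimpleGraph ((Fin b₁ × Fin r) ⊕ (Fin b₂ × Fin r) ⊕ Bool) :=
  SimpleGraph.fromRel fun x y =>
    match x, y with
    | Sum.inr (Sum.inr false), Sum.inr (Sum.inr true) => True
    | Sum.inr (Sum.inr false), Sum.inl (_, i) => (i : ℕ) = 0
    | Sum.inr (Sum.inr true), Sum.inr (Sum.inl (_, i)) => (i : ℕ) = 0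
    | Sum.inl (ℓ, i), Sum.inl (m, j) => ℓ = m ∧ (j : ℕ) = (i : ℕ) + 1
    | Sum.inr (Sum.inl (ℓ, i)), Sum.inr (Sum.inl (m, j)) => ℓ = m ∧ (j : ℕ) = (i : ℕ) + 1
    | _, _ => False

/-!
Replacing each leg by a single edge of resistance `r` does not increase the energy of a function,
by the Cauchy–Schwarz inequality, and preserves it when the function is affine on the legs. This
leaves two stars with joined centres. Optimizing over the potentials of the centres (resistances in
series add up) gives the Dirichlet-to-Neumann form. For a function on the leaves, split into the
two groups at `u₀` and at `v₀`, it depends only on the variation between the groups and the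
variation within the groups, as in the analysis of variance: it is the sum of `ν` times the former
and `1 / r` times the latter, where `ν ≤ 1 / r`. So the eigenvalues are `0` on constants, `ν` on the
contrast of the two groups, and `1 / r` on functions with sum zero on each group.
-/

section MinMax

variable {S : Type*} [Fintype S]

/-- The `k`-th Courant–Fischer min-max value of a functional `Q` on `ℝ^S`, relative to the
Euclidean norm; for a quadratic form `Q` and `1 ≤ k ≤ |S|` it is the `k`-th smallest eigenvalue
of `Q`. For other `k` it has the junk value of `sInf`. -/
noncomputable def minMaxValue (Q : (S → ℝ) → ℝ) (k : ℕ) : ℝ :=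
  sInf {t : ℝ | ∃ W : Submodule ℝ (S → ℝ),
    Module.finrank ℝ W = k ∧ ∀ w ∈ W, Q w ≤ t * ∑ s, w s ^ 2}

lemma exists_mem_ne_zero_map_eq_zero_of_finrank_lt {K E N : Type*} [DivisionRing K]
    [AddCommGroup E] [Module K E] [AddCommGroup N] [Module K N] [FiniteDimensional K N]
    (W : Submodule K E) [FiniteDimensional K W] (φ : E →ₗ[K] N)
    (h : Module.finrank K N < Module.finrank K W) : ∃ w ∈ W, w ≠ 0 ∧ φ w = 0 := by
  obtain ⟨w, hφ, hw⟩ := Submodule.exists_mem_ne_zero_of_ne_bot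
    (LinearMap.ker_ne_bot_of_finrank_lt (f := φ.domRestrict W) h)
  exact ⟨w, w.2, Subtype.coe_ne_coe.2 hw, hφ⟩

lemma minMaxValue_eq {N : Type*} [AddCommGroup N] [Module ℝ N] [FiniteDimensional ℝ N]
    {Q : (S → ℝ) → ℝ} {t : ℝ} (W : Submodule ℝ (S → ℝ)) (φ : (S → ℝ) →ₗ[ℝ] N)
    (hW : ∀ w ∈ W, Q w ≤ t * ∑ s, w s ^ 2) (hφ : ∀ w, φ w = 0 → t * ∑ s, w s ^ 2 ≤ Q w)
    (hlt : Module.finrank ℝ N < Module.finrank ℝ W) :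
    minMaxValue Q (Module.finrank ℝ W) = t := by
  refine IsLeast.csInf_eq ⟨⟨W, rfl, hW⟩, ?_⟩
  rintro u ⟨U, hU, hu⟩
  obtain ⟨w, hwU, hw₀, hφw⟩ := exists_mem_ne_zero_map_eq_zero_of_finrank_lt U φ (hU ▸ hlt)
  have hpos : 0 < ∑ s, w s ^ 2 := by
    obtain ⟨s, hs⟩ := Function.ne_iff.1 hw₀
    exact Finset.sum_pos' (fun _ _ => sq_nonneg _) ⟨s, Finset.mem_univ s, pow_two_pos_of_ne_zero hs⟩
  exact le_of_mul_le_mul_right ((hφ w hφw).trans (hu w hwU)) hpos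

lemma exists_submodule_finrank_eq {K E : Type*} [Field K] [AddCommGroup E] [Module K E] {k : ℕ}
    (h : k ≤ Module.finrank K E) : ∃ W : Submodule K E, Module.finrank K W = k := by
  obtain ⟨v, hv⟩ := exists_linearIndependent_of_le_finrank h
  exact ⟨Submodule.span K (Set.range v), by rw [finrank_span_eq_card hv, Fintype.card_fin]⟩

end MinMax

section Steklov

variable {S V : Type*} [Fintype S]

lemma finrank_map_funLeft_val_map_univ (e : S ↪ V) (F : Submodule ℝ (V → ℝ)) :
    Module.finrank ℝ (F.map (LinearMap.funLeft ℝ ℝ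
      (fun x : {v // v ∈ Finset.univ.map e} => (x : V)))) =
      Module.finrank ℝ (F.map (LinearMap.funLeft ℝ ℝ e)) := by
  let ε : S ≃ {v // v ∈ Finset.univ.map e} :=
    Equiv.ofBijective (fun s => ⟨e s, Finset.mem_map_of_mem e (Finset.mem_univ s)⟩)
      ⟨fun s t h => e.injective (congrArg Subtype.val h), fun ⟨v, hv⟩ => by simpa using hv⟩
  rw [← (LinearEquiv.funCongrLeft ℝ ℝ ε).finrank_map_eq, ← Submodule.map_comp]
  rfl

lemma steklovEig_map_univ_eq_minMaxValue [Fintype V] (G : SimpleGraph V) (e : S ↪ V)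
    (Q : (S → ℝ) → ℝ) (hQ : ∀ f : V → ℝ, Q (f ∘ e) ≤ dirichletEnergy G f)
    (ext : (S → ℝ) →ₗ[ℝ] V → ℝ) (hext : ∀ w, ext w ∘ e = w)
    (hE : ∀ w, dirichletEnergy G (ext w) = Q w) (k : ℕ) :
    steklovEig G (Finset.univ.map e) k = minMaxValue Q k := by
  unfold steklovEig minMaxValue
  simp only [finrank_map_funLeft_val_map_univ, Finset.sum_map]
  congr 1
  ext t
  constructor
  · rintro ⟨F, hF, h⟩
    refine ⟨F.map (LinearMap.funLeft ℝ ℝ e), hF, ?_⟩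
    rintro _ ⟨f, hf, rfl⟩
    exact (hQ f).trans (h f hf)
  · rintro ⟨W, hW, h⟩
    have hid : LinearMap.funLeft ℝ ℝ e ∘ₗ ext = LinearMap.id := LinearMap.ext hext
    refine ⟨W.map ext, by rwa [← Submodule.map_comp, hid, Submodule.map_id], ?_⟩
    rintro _ ⟨w, hw, rfl⟩
    calc dirichletEnergy G (ext w) = Q w := hE w
      _ ≤ t * ∑ s, w s ^ 2 := h w hw
      _ = t * ∑ s, ext w (e s) ^ 2 := by simp only [← Function.comp_apply (f := ext w), hext]

end Steklov

section TwoBlocks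

open Finset Fintype

variable {α β : Type*} [Fintype α] [Fintype β]

lemma sum_sub_sq_eq_sum_sub_expect_sq_add {ι : Type*} [Fintype ι] (w : ι → ℝ) (a : ℝ) :
    ∑ i, (w i - a) ^ 2 = ∑ i, (w i - 𝔼 j, w j) ^ 2 + card ι * (𝔼 j, w j - a) ^ 2 := by
  have hmean : ∑ i, w i = card ι * 𝔼 j, w j := (card_mul_expect w).symm
  simp only [sub_sq, sum_add_distrib, sum_sub_distrib, ← sum_mul, ← mul_sum, hmean, sum_const,
    card_univ, nsmul_eq_mul]
  ring

/-- The within-group sum of squares of a sample with the two groups `α` and `β`. -/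
noncomputable def withinSq (w : α ⊕ β → ℝ) : ℝ :=
  ∑ i, (w (.inl i) - 𝔼 j, w (.inl j)) ^ 2 + ∑ i, (w (.inr i) - 𝔼 j, w (.inr j)) ^ 2

/-- The between-group sum of squares of a sample with the two groups `α` and `β`. -/
noncomputable def betweenSq (w : α ⊕ β → ℝ) : ℝ :=
  card α * card β / (card α + card β) * (𝔼 i, w (.inl i) - 𝔼 i, w (.inr i)) ^ 2

lemma withinSq_nonneg (w : α ⊕ β → ℝ) : 0 ≤ withinSq w := by
  unfold withinSq; positivity

lemma betweenSq_nonneg (w : α ⊕ β → ℝ) : 0 ≤ betweenSq w := by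
  unfold betweenSq; positivity

lemma sum_sq_eq_withinSq_add_betweenSq_add (w : α ⊕ β → ℝ) :
    ∑ s, w s ^ 2 = withinSq w + betweenSq w + (∑ s, w s) ^ 2 / (card α + card β) := by
  have hα := sum_sub_sq_eq_sum_sub_expect_sq_add (fun i => w (.inl i)) 0
  have hβ := sum_sub_sq_eq_sum_sub_expect_sq_add (fun i => w (.inr i)) 0
  simp only [sub_zero] at hα hβ
  simp only [sum_sum_type, hα, hβ, withinSq, betweenSq,
    ← card_mul_expect (fun i => w (.inl i)), ← card_mul_expect (fun i => w (.inr i))]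
  obtain h | h := isEmpty_or_nonempty (α ⊕ β)
  · obtain ⟨_, _⟩ := isEmpty_sum.1 h
    simp
  · have hcard : (card (α ⊕ β) : ℝ) ≠ 0 := Nat.cast_ne_zero.2 card_ne_zero
    rw [card_sum, Nat.cast_add] at hcard
    field_simp
    ring

/-- The quadratic form on `ℝ^(α ⊕ β)` acting by `ν` on the differences of the two group means and
by `ρ` on the deviations from them. -/
noncomputable def anovaForm (ν ρ : ℝ) (w : α ⊕ β → ℝ) : ℝ :=
  ν * betweenSq w + ρ * withinSq w

lemma anovaForm_nonneg {ν ρ : ℝ} (hν : 0 ≤ ν) (hρ : 0 ≤ ρ) (w : α ⊕ β → ℝ) :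
    0 ≤ anovaForm ν ρ w :=
  add_nonneg (mul_nonneg hν (betweenSq_nonneg w)) (mul_nonneg hρ (withinSq_nonneg w))

section Spectrum

variable {ν ρ : ℝ}

lemma minMaxValue_anovaForm_one [Nonempty α] [Nonempty β] (hν : 0 ≤ ν) (hρ : 0 ≤ ρ) :
    minMaxValue (anovaForm ν ρ : (α ⊕ β → ℝ) → ℝ) 1 = 0 := by
  have hone : (1 : α ⊕ β → ℝ) ≠ 0 := one_ne_zero
  rw [← finrank_span_singleton (K := ℝ) hone]
  refine minMaxValue_eq _ (0 : (α ⊕ β → ℝ) →ₗ[ℝ] Fin 0 → ℝ) ?_ ?_ ?_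
  · intro w hw
    obtain ⟨c, rfl⟩ := Submodule.mem_span_singleton.1 hw
    simp [anovaForm, betweenSq, withinSq]
  · intro w _
    simpa using anovaForm_nonneg hν hρ w
  · simp [finrank_span_singleton hone]

lemma minMaxValue_anovaForm_two [Nonempty α] [Nonempty β] (hν : 0 ≤ ν) (h : ν ≤ ρ) :
    minMaxValue (anovaForm ν ρ : (α ⊕ β → ℝ) → ℝ) 2 = ν := by
  let blockwise : (Bool → ℝ) →ₗ[ℝ] α ⊕ β → ℝ := LinearMap.funLeft ℝ ℝ Sum.isLeft
  have hinj : Function.Injective blockwise :=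
    LinearMap.funLeft_injective_of_surjective ℝ ℝ Sum.isLeft fun
      | true => ⟨.inl (Classical.arbitrary α), rfl⟩
      | false => ⟨.inr (Classical.arbitrary β), rfl⟩
  have hrank : Module.finrank ℝ (LinearMap.range blockwise) = 2 := by
    simp [LinearMap.finrank_range_of_inj hinj]
  rw [← hrank]
  refine minMaxValue_eq _ (∑ s, LinearMap.proj s : (α ⊕ β → ℝ) →ₗ[ℝ] ℝ) ?_ ?_ (by simp [hrank])
  · rintro _ ⟨c, rfl⟩
    have hwithin : withinSq (blockwise c) = 0 := by
      simp [withinSq, blockwise, LinearMap.funLeft_apply]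
    have hmean : 0 ≤ (∑ s, blockwise c s) ^ 2 / ((card α : ℝ) + card β) := by positivity
    rw [sum_sq_eq_withinSq_add_betweenSq_add, anovaForm, hwithin]
    linear_combination mul_nonneg hν hmean
  · intro w hw
    have hsum : ∑ s, w s = 0 := by simpa using hw
    rw [sum_sq_eq_withinSq_add_betweenSq_add, anovaForm, hsum]
    have hle := mul_le_mul_of_nonneg_right h (withinSq_nonneg w)
    linear_combination hle

lemma minMaxValue_anovaForm_of_three_le (hν : 0 ≤ ν) (h : ν ≤ ρ) {k : ℕ} (hk : 3 ≤ k)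
    (hcard : k ≤ card α + card β) :
    minMaxValue (anovaForm ν ρ : (α ⊕ β → ℝ) → ℝ) k = ρ := by
  obtain ⟨W, rfl⟩ := exists_submodule_finrank_eq (K := ℝ) (E := α ⊕ β → ℝ) (k := k) (by simpa)
  let groupSums : (α ⊕ β → ℝ) →ₗ[ℝ] ℝ × ℝ :=
    (∑ i, LinearMap.proj (R := ℝ) (φ := fun _ : α ⊕ β => ℝ) (.inl i)).prod
      (∑ i, LinearMap.proj (R := ℝ) (φ := fun _ : α ⊕ β => ℝ) (.inr i))
  refine minMaxValue_eq W groupSums ?_ ?_ (by simpa)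
  · intro w _
    have hmean : 0 ≤ (∑ s, w s) ^ 2 / ((card α : ℝ) + card β) := by positivity
    rw [sum_sq_eq_withinSq_add_betweenSq_add, anovaForm]
    linear_combination mul_le_mul_of_nonneg_right h (betweenSq_nonneg w) +
      mul_nonneg (hν.trans h) hmean
  · intro w hw
    obtain ⟨hα, hβ⟩ : ∑ i, w (.inl i) = 0 ∧ ∑ i, w (.inr i) = 0 := by
      simpa [groupSums] using hw
    have hbetween : betweenSq w = 0 := by
      simp [betweenSq, Fintype.expect_eq_sum_div_card, hα, hβ]
    rw [sum_sq_eq_withinSq_add_betweenSq_add, anovaForm, hbetween, sum_sum_type, hα, hβ]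
    simp

end Spectrum

end TwoBlocks

section TwoStars

open Finset Fintype

variable {α β : Type*} [Fintype α] [Fintype β]

/-- The energy of the network in which two centres with potentials `a` and `c` are joined by an
edge of conductance `1`, and the terminals in `α`, resp. `β`, with potentials `w`, are joined to
the first, resp. second, centre by edges of resistance `R`. -/
noncomputable def twoStarEnergy (R a c : ℝ) (w : α ⊕ β → ℝ) : ℝ :=
  (a - c) ^ 2 + ∑ i, (w (.inl i) - a) ^ 2 / R + ∑ i, (w (.inr i) - c) ^ 2 / R

/-- The potential difference of the two centres of the two-star network when both are in
equilibrium, by Ohm's law in the series circuit of resistances `R / |α|`, `1` and `R / |β|`. -/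
noncomputable def centreDrop (R : ℝ) (w : α ⊕ β → ℝ) : ℝ :=
  (𝔼 i, w (.inl i) - 𝔼 i, w (.inr i)) / (R / card α + 1 + R / card β)

variable (α β) in
/-- The second eigenvalue of the two-star network, as a function of the resistance `R` of the edges
from the centres to the terminals. -/
noncomputable def twoStarGap (R : ℝ) : ℝ :=
  (card α + card β) / (card α * card β + R * (card α + card β))

lemma twoStarGap_nonneg {R : ℝ} (hR : 0 ≤ R) : 0 ≤ twoStarGap α β R := by
  unfold twoStarGap; positivity

lemma twoStarGap_le {R : ℝ} (hR : 0 < R) : twoStarGap α β R ≤ 1 / R := by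
  refine div_le_of_le_mul₀ (by positivity) (by positivity) ?_
  rw [mul_add, ← mul_assoc (1 / R) R, one_div_mul_cancel hR.ne', one_mul]
  exact le_add_of_nonneg_left (by positivity)

lemma twoStarEnergy_eq (R a c : ℝ) (w : α ⊕ β → ℝ) :
    twoStarEnergy R a c w = (1 / R) * withinSq w + ((a - c) ^ 2 +
      card α * (𝔼 i, w (.inl i) - a) ^ 2 / R + card β * (𝔼 i, w (.inr i) - c) ^ 2 / R) := by
  have hα := sum_sub_sq_eq_sum_sub_expect_sq_add (fun i => w (.inl i)) a
  have hβ := sum_sub_sq_eq_sum_sub_expect_sq_add (fun i => w (.inr i)) c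
  rw [twoStarEnergy, ← sum_div, ← sum_div, hα, hβ, withinSq]
  ring

variable [Nonempty α] [Nonempty β] {R : ℝ}

lemma twoStarGap_mul_betweenSq (hR : 0 < R) (w : α ⊕ β → ℝ) :
    twoStarGap α β R * betweenSq w =
      (𝔼 i, w (.inl i) - 𝔼 i, w (.inr i)) ^ 2 / (R / card α + 1 + R / card β) := by
  rw [twoStarGap, betweenSq]
  field_simp
  ring

lemma anovaForm_le_twoStarEnergy (hR : 0 < R) (a c : ℝ) (w : α ⊕ β → ℝ) :
    anovaForm (twoStarGap α β R) (1 / R) w ≤ twoStarEnergy R a c w := by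
  have hres : ∀ i ∈ univ, 0 < ![R / card α, 1, R / card β] i := fun i _ => by
    fin_cases i <;> dsimp <;> positivity
  have hseries : (𝔼 i, w (.inl i) - 𝔼 i, w (.inr i)) ^ 2 / (R / card α + 1 + R / card β) ≤
      (𝔼 i, w (.inl i) - a) ^ 2 / (R / card α) + (a - c) ^ 2 +
        (c - 𝔼 i, w (.inr i)) ^ 2 / (R / card β) := by
    simpa [Fin.sum_univ_three] using
      sq_sum_div_le_sum_sq_div univ ![𝔼 i, w (.inl i) - a, a - c, c - 𝔼 i, w (.inr i)] hres
  rw [twoStarEnergy_eq, anovaForm, twoStarGap_mul_betweenSq hR]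
  rw [div_div_eq_mul_div, div_div_eq_mul_div] at hseries
  linear_combination hseries

lemma twoStarEnergy_eq_anovaForm (hR : 0 < R) (w : α ⊕ β → ℝ) :
    twoStarEnergy R (𝔼 i, w (.inl i) - R / card α * centreDrop R w)
      (𝔼 i, w (.inr i) + R / card β * centreDrop R w) w =
        anovaForm (twoStarGap α β R) (1 / R) w := by
  rw [twoStarEnergy_eq, anovaForm, twoStarGap_mul_betweenSq hR, centreDrop]
  field_simp
  ring

end TwoStars

section ParentMap

/-- `p` is the parent map of a rooted forest structure on `G`: the edges of `G` are the pairs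
formed by a vertex and its parent, and the roots are the vertices sent to `none`. -/
structure IsParentMap_s10 {V : Type*} (G : SimpleGraph V) (p : V → Option V) : Prop where
  adj_iff (x y : V) : G.Adj x y ↔ p y = some x ∨ p x = some y
  asymm (x y : V) : p y = some x → p x ≠ some y

variable {V : Type*} {G : SimpleGraph V} {p : V → Option V}

lemma IsParentMap_s10.degree_eq_one_iff (hp : IsParentMap_s10 G p) {x y : V}
    [Fintype (G.neighborSet y)] (hxy : p y = some x) :
    G.degree y = 1 ↔ ∀ z, p z ≠ some y := by
  rw [SimpleGraph.degree_eq_one_iff_existsUnique_adj]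
  constructor
  · intro hunique z hz
    obtain rfl : z = x :=
      hunique.unique ((hp.adj_iff y z).2 (.inl hz)) ((hp.adj_iff y x).2 (.inr hxy))
    exact hp.asymm z y hxy hz
  · intro hchildless
    refine ⟨x, (hp.adj_iff y x).2 (.inr hxy), fun z hz => ?_⟩
    have hyz : p y = some z := ((hp.adj_iff y z).1 hz).resolve_left (hchildless z)
    exact Option.some_inj.1 (hyz.symm.trans hxy)

lemma IsParentMap_s10.dirichletEnergy_eq [Fintype V] (hp : IsParentMap_s10 G p) (f : V → ℝ) :
    dirichletEnergy G f = ∑ y, (p y).elim 0 fun x => (f y - f x) ^ 2 := by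
  have hsplit (x y : V) : (if G.Adj x y then (f x - f y) ^ 2 else 0) =
      (if p y = some x then (f y - f x) ^ 2 else 0) +
        if p x = some y then (f x - f y) ^ 2 else 0 := by
    have hasymm := hp.asymm x y
    simp only [hp.adj_iff]
    by_cases hyx : p y = some x
    · simp [hyx, hasymm hyx, sub_sq_comm]
    · simp [hyx]
  have hparent (y : V) : (∑ x, if p y = some x then (f y - f x) ^ 2 else 0) =
      (p y).elim 0 fun x => (f y - f x) ^ 2 := by
    cases p y <;> simp
  simp only [dirichletEnergy, hsplit, Finset.sum_add_distrib, hparent]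
  rw [Finset.sum_comm]
  simp only [hparent]
  ring

end ParentMap

lemma degree_ne_one_of_adj_of_adj {V : Type*} {G : SimpleGraph V} {x y z : V}
    [Fintype (G.neighborSet x)] (hy : G.Adj x y) (hz : G.Adj x z) (hyz : y ≠ z) :
    G.degree x ≠ 1 := fun h =>
  hyz ((SimpleGraph.degree_eq_one_iff_existsUnique_adj.1 h).unique hy hz)

section Path

/-- The Dirichlet energy of a function on a path of length `n`. -/
noncomputable def pathEnergy {n : ℕ} (q : Fin (n + 1) → ℝ) : ℝ :=
  ∑ i : Fin n, (q i.succ - q i.castSucc) ^ 2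

lemma sq_sub_div_le_pathEnergy {n : ℕ} (q : Fin (n + 1) → ℝ) :
    (q (Fin.last n) - q 0) ^ 2 / n ≤ pathEnergy q := by
  have htelescope : ∑ i : Fin n, (q i.succ - q i.castSucc) = q (Fin.last n) - q 0 := by
    rw [Finset.sum_sub_distrib]
    linear_combination Fin.sum_univ_castSucc q - Fin.sum_univ_succ q
  simpa [htelescope, pathEnergy] using Finset.sq_sum_div_le_sum_sq_div Finset.univ
    (fun i : Fin n => q i.succ - q i.castSucc) (g := 1) (by simp)

lemma pathEnergy_affine (n : ℕ) (a d : ℝ) :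
    pathEnergy (fun i : Fin (n + 1) => a + i / n * d) = d ^ 2 / n := by
  have hstep (i : Fin n) :
      (a + (i.succ : ℕ) / n * d - (a + (i.castSucc : ℕ) / n * d)) ^ 2 = (d / n) ^ 2 := by
    rw [Fin.val_succ, Fin.val_castSucc, Nat.cast_succ]
    ring
  simp only [pathEnergy, hstep, Finset.sum_const, Finset.card_univ, Fintype.card_fin, nsmul_eq_mul]
  obtain rfl | hn := eq_or_ne n 0
  · simp
  · field_simp

end Path

section Crab

variable {b₁ b₂ r : ℕ}

/-- The vertex type of the crab graph `CG(b₁, b₂, r)`. -/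
abbrev CrabVertex (b₁ b₂ r : ℕ) : Type := (Fin b₁ × Fin r) ⊕ (Fin b₂ × Fin r) ⊕ Bool

/-- The endpoint `u₀` or `v₀` of the central edge at which the leg `s` is attached. -/
def crabFoot : Fin b₁ ⊕ Fin b₂ → CrabVertex b₁ b₂ r :=
  Sum.elim (fun _ => .inr (.inr false)) fun _ => .inr (.inr true)

/-- The `i`-th vertex of the leg `s`, counted from the vertex next to the foot. -/
def crabLegVertex : Fin b₁ ⊕ Fin b₂ → Fin r → CrabVertex b₁ b₂ r
  | .inl l, i => .inl (l, i)
  | .inr l, i => .inr (.inl (l, i))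

/-- The leg `s` as a path of length `r` that starts at its foot. -/
def crabLeg (s : Fin b₁ ⊕ Fin b₂) : Fin (r + 1) → CrabVertex b₁ b₂ r :=
  Fin.cons (crabFoot s) (crabLegVertex s)

@[simp] lemma crabLeg_zero (s : Fin b₁ ⊕ Fin b₂) :
    crabLeg s (0 : Fin (r + 1)) = crabFoot s := rfl

@[simp] lemma crabLeg_succ (s : Fin b₁ ⊕ Fin b₂) (i : Fin r) :
    crabLeg s i.succ = crabLegVertex s i := rfl

/-- The parent map of the crab graph rooted at `u₀`. -/
def crabParent : CrabVertex b₁ b₂ r → Option (CrabVertex b₁ b₂ r)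
  | .inl (l, i) => some (crabLeg (.inl l) i.castSucc)
  | .inr (.inl (l, i)) => some (crabLeg (.inr l) i.castSucc)
  | .inr (.inr true) => some (.inr (.inr false))
  | .inr (.inr false) => none

@[simp] lemma crabParent_crabLegVertex (s : Fin b₁ ⊕ Fin b₂) (i : Fin r) :
    crabParent (crabLegVertex s i) = some (crabLeg s i.castSucc) := by
  cases s <;> rfl

lemma crabLegVertex_inj {s t : Fin b₁ ⊕ Fin b₂} {i j : Fin r} :
    crabLegVertex s i = crabLegVertex t j ↔ s = t ∧ i = j := by
  cases s <;> cases t <;> simp [crabLegVertex]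

lemma crabLeg_castSucc_eq_crabLegVertex_iff {s t : Fin b₁ ⊕ Fin b₂} {i j : Fin r} :
    crabLeg s i.castSucc = crabLegVertex t j ↔ s = t ∧ (i : ℕ) = j + 1 := by
  obtain _ | r := r
  · exact i.elim0
  cases i using Fin.cases with
  | zero => cases s <;> cases t <;> simp [crabFoot, crabLegVertex]
  | succ i => simp [crabLegVertex_inj, Fin.ext_iff]

lemma crabLeg_castSucc_eq_center_iff {s : Fin b₁ ⊕ Fin b₂} {i : Fin r} {c : Bool} :
    crabLeg s i.castSucc = .inr (.inr c) ↔ s.isRight = c ∧ (i : ℕ) = 0 := by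
  obtain _ | r := r
  · exact i.elim0
  cases i using Fin.cases with
  | zero => cases s <;> simp [crabFoot]
  | succ i => cases s <;> simp [crabLegVertex]

lemma crabLeg_castSucc_eq_inl_iff {s : Fin b₁ ⊕ Fin b₂} {l : Fin b₁} {i j : Fin r} :
    crabLeg s i.castSucc = .inl (l, j) ↔ s = .inl l ∧ (i : ℕ) = j + 1 :=
  crabLeg_castSucc_eq_crabLegVertex_iff (t := .inl l)

lemma crabLeg_castSucc_eq_inr_inl_iff {s : Fin b₁ ⊕ Fin b₂} {l : Fin b₂} {i j : Fin r} :
    crabLeg s i.castSucc = .inr (.inl (l, j)) ↔ s = .inr l ∧ (i : ℕ) = j + 1 :=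
  crabLeg_castSucc_eq_crabLegVertex_iff (t := .inr l)

lemma isParentMap_crabParent : IsParentMap_s10 (crabGraph b₁ b₂ r) crabParent where
  adj_iff x y := by
    rcases x with ⟨l, i⟩ | ⟨l, i⟩ | _ | _ <;> rcases y with ⟨m, j⟩ | ⟨m, j⟩ | _ | _ <;>
      simp [crabGraph, SimpleGraph.fromRel_adj, crabParent, crabLeg_castSucc_eq_inl_iff,
        crabLeg_castSucc_eq_inr_inl_iff, crabLeg_castSucc_eq_center_iff, Fin.ext_iff] <;> omega
  asymm x y hxy hyx := by
    rcases x with ⟨l, i⟩ | ⟨l, i⟩ | _ | _ <;> rcases y with ⟨m, j⟩ | ⟨m, j⟩ | _ | _ <;>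
      simp [crabParent, crabLeg_castSucc_eq_inl_iff, crabLeg_castSucc_eq_inr_inl_iff,
        crabLeg_castSucc_eq_center_iff] at hxy hyx <;> omega

lemma exists_eq_crabLegVertex_or_exists_eq_center (x : CrabVertex b₁ b₂ r) :
    (∃ s i, x = crabLegVertex s i) ∨ ∃ c, x = .inr (.inr c) := by
  rcases x with ⟨l, i⟩ | ⟨l, i⟩ | c
  exacts [.inl ⟨.inl l, i, rfl⟩, .inl ⟨.inr l, i, rfl⟩, .inr ⟨c, rfl⟩]

section Leaves

variable [NeZero r]

/-- The far end of the leg `s`; these are the leaves of the crab graph. -/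
def crabTip : Fin b₁ ⊕ Fin b₂ ↪ CrabVertex b₁ b₂ r where
  toFun s := crabLegVertex s ⊤
  inj' _ _ h := (crabLegVertex_inj.1 h).1

lemma crabTip_apply (s : Fin b₁ ⊕ Fin b₂) :
    crabTip s = (crabLegVertex s ⊤ : CrabVertex b₁ b₂ r) := rfl

lemma crabLeg_last (s : Fin b₁ ⊕ Fin b₂) : crabLeg s (Fin.last r) = crabTip s := by
  rw [← Fin.top_eq_last, ← Fin.succ_top, crabLeg_succ, crabTip_apply]

lemma degree_crabLegVertex_eq_one_iff {s : Fin b₁ ⊕ Fin b₂} {i : Fin r} :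
    (crabGraph b₁ b₂ r).degree (crabLegVertex s i) = 1 ↔ i = ⊤ := by
  rw [isParentMap_crabParent.degree_eq_one_iff (crabParent_crabLegVertex s i)]
  constructor
  · intro hchildless
    by_contra hi
    have hlt : (i : ℕ) + 1 < r := by
      have := Fin.lt_def.1 (lt_top_iff_ne_top.2 hi)
      rw [Fin.val_top] at this
      omega
    refine hchildless (crabLegVertex s ⟨i + 1, hlt⟩) ?_
    rw [crabParent_crabLegVertex, crabLeg_castSucc_eq_crabLegVertex_iff.2 ⟨rfl, rfl⟩]
  · rintro rfl z
    obtain ⟨t, j, rfl⟩ | ⟨_ | _, rfl⟩ := exists_eq_crabLegVertex_or_exists_eq_center z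
    · rw [crabParent_crabLegVertex, ne_eq, Option.some_inj, crabLeg_castSucc_eq_crabLegVertex_iff]
      rintro ⟨-, hj⟩
      have := j.isLt
      rw [Fin.val_top] at hj
      omega
    · simp [crabParent]
    · cases s <;> simp [crabParent, crabLegVertex]

variable [NeZero b₁] [NeZero b₂]

lemma degree_center_ne_one (c : Bool) : (crabGraph b₁ b₂ r).degree (.inr (.inr c)) ≠ 1 := by
  cases c
  · refine degree_ne_one_of_adj_of_adj (y := .inl (0, 0)) (z := .inr (.inr true)) ?_ ?_ ?_ <;>
      simp [crabGraph]
  · refine degree_ne_one_of_adj_of_adj (y := .inr (.inl (0, 0))) (z := .inr (.inr false))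
      ?_ ?_ ?_ <;> simp [crabGraph]

lemma leavesFinset_crabGraph : leavesFinset (crabGraph b₁ b₂ r) = Finset.univ.map crabTip := by
  ext x
  simp only [leavesFinset, Finset.mem_filter_univ, Finset.mem_map, Finset.mem_univ, true_and]
  obtain ⟨s, i, rfl⟩ | ⟨c, rfl⟩ := exists_eq_crabLegVertex_or_exists_eq_center x
  · simp [degree_crabLegVertex_eq_one_iff, crabTip_apply, crabLegVertex_inj, eq_comm (a := ⊤),
      -Sum.exists]
  · simp only [degree_center_ne_one, false_iff]
    rintro ⟨_ | _, h⟩ <;> simp [crabTip_apply, crabLegVertex] at h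

end Leaves

lemma dirichletEnergy_crabGraph (f : CrabVertex b₁ b₂ r → ℝ) :
    dirichletEnergy (crabGraph b₁ b₂ r) f =
      (f (.inr (.inr false)) - f (.inr (.inr true))) ^ 2 + ∑ s, pathEnergy (f ∘ crabLeg s) := by
  rw [isParentMap_crabParent.dirichletEnergy_eq]
  simp only [Fintype.sum_sum_type, Fintype.sum_prod_type, Fintype.sum_bool, crabParent,
    Option.elim, pathEnergy, Function.comp_apply, crabLeg_succ, crabLegVertex]
  ring

lemma twoStarEnergy_le_dirichletEnergy_crabGraph [NeZero r] (f : CrabVertex b₁ b₂ r → ℝ) :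
    twoStarEnergy r (f (.inr (.inr false))) (f (.inr (.inr true))) (f ∘ crabTip) ≤
      dirichletEnergy (crabGraph b₁ b₂ r) f := by
  have hleg (s : Fin b₁ ⊕ Fin b₂) : (f (crabTip s) - f (crabFoot s)) ^ 2 / r ≤
      pathEnergy (f ∘ crabLeg s) := by
    simpa [crabLeg_last] using sq_sub_div_le_pathEnergy (f ∘ crabLeg s)
  rw [dirichletEnergy_crabGraph, twoStarEnergy, add_assoc, Fintype.sum_sum_type]
  exact add_le_add_right (add_le_add (Finset.sum_le_sum fun l _ => hleg (.inl l))
    (Finset.sum_le_sum fun l _ => hleg (.inr l))) _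

/-- The function on the crab graph that is `a` at `u₀`, `c` at `v₀`, `w s` at the end of the leg `s`
and affine along each leg. -/
noncomputable def crabInterpolation (a c : ℝ) (w : Fin b₁ ⊕ Fin b₂ → ℝ) : CrabVertex b₁ b₂ r → ℝ
  | .inl (l, i) => a + (i + 1 : ℕ) / r * (w (.inl l) - a)
  | .inr (.inl (l, i)) => c + (i + 1 : ℕ) / r * (w (.inr l) - c)
  | .inr (.inr false) => a
  | .inr (.inr true) => c

lemma crabInterpolation_comp_crabLeg_inl (a c : ℝ) (w : Fin b₁ ⊕ Fin b₂ → ℝ) (l : Fin b₁) :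
    crabInterpolation a c w ∘ crabLeg (.inl l) =
      fun j : Fin (r + 1) => a + j / r * (w (.inl l) - a) := by
  ext j
  cases j using Fin.cases <;> simp [crabFoot, crabLegVertex, crabInterpolation]

lemma crabInterpolation_comp_crabLeg_inr (a c : ℝ) (w : Fin b₁ ⊕ Fin b₂ → ℝ) (l : Fin b₂) :
    crabInterpolation a c w ∘ crabLeg (.inr l) =
      fun j : Fin (r + 1) => c + j / r * (w (.inr l) - c) := by
  ext j
  cases j using Fin.cases <;> simp [crabFoot, crabLegVertex, crabInterpolation]

lemma crabInterpolation_comp_crabTip [NeZero r] (a c : ℝ) (w : Fin b₁ ⊕ Fin b₂ → ℝ) :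
    crabInterpolation a c w ∘ (crabTip (r := r)) = w := by
  have hr : (r : ℝ) ≠ 0 := NeZero.ne _
  ext (l | l)
  · simpa [crabLeg_last, hr] using
      congrFun (crabInterpolation_comp_crabLeg_inl a c w l) (Fin.last r)
  · simpa [crabLeg_last, hr] using
      congrFun (crabInterpolation_comp_crabLeg_inr a c w l) (Fin.last r)

lemma dirichletEnergy_crabInterpolation (a c : ℝ) (w : Fin b₁ ⊕ Fin b₂ → ℝ) :
    dirichletEnergy (crabGraph b₁ b₂ r) (crabInterpolation a c w) = twoStarEnergy r a c w := by
  simp only [dirichletEnergy_crabGraph, Fintype.sum_sum_type, crabInterpolation_comp_crabLeg_inl,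
    crabInterpolation_comp_crabLeg_inr, pathEnergy_affine, crabInterpolation, twoStarEnergy,
    add_assoc]

/-- The harmonic extension to the crab graph of a function on its leaves. -/
noncomputable def crabHarmonicExtension (b₁ b₂ r : ℕ) :
    (Fin b₁ ⊕ Fin b₂ → ℝ) →ₗ[ℝ] CrabVertex b₁ b₂ r → ℝ where
  toFun w := crabInterpolation
    (𝔼 i, w (.inl i) - r / Fintype.card (Fin b₁) * centreDrop r w)
    (𝔼 i, w (.inr i) + r / Fintype.card (Fin b₂) * centreDrop r w) w
  map_add' w w' := by
    ext x
    rcases x with _ | _ | _ | _ <;>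
      simp [crabInterpolation, centreDrop, Finset.expect_add_distrib] <;> ring
  map_smul' t w := by
    ext x
    rcases x with _ | _ | _ | _ <;>
      simp [crabInterpolation, centreDrop, ← Finset.mul_expect] <;> ring

lemma steklovEig_crabGraph [NeZero b₁] [NeZero b₂] [NeZero r] (k : ℕ) :
    steklovEig (crabGraph b₁ b₂ r) (leavesFinset (crabGraph b₁ b₂ r)) k =
      minMaxValue
        (anovaForm (twoStarGap (Fin b₁) (Fin b₂) r) (1 / r) : (Fin b₁ ⊕ Fin b₂ → ℝ) → ℝ) k := by
  have hr : (0 : ℝ) < r := Nat.cast_pos.2 (NeZero.pos r)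
  rw [leavesFinset_crabGraph]
  refine steklovEig_map_univ_eq_minMaxValue _ crabTip _ (fun f => ?_)
    (crabHarmonicExtension b₁ b₂ r) (fun w => crabInterpolation_comp_crabTip _ _ w) (fun w => ?_) k
  · exact (anovaForm_le_twoStarEnergy hr _ _ _).trans (twoStarEnergy_le_dirichletEnergy_crabGraph f)
  · exact (dirichletEnergy_crabInterpolation _ _ w).trans (twoStarEnergy_eq_anovaForm hr w)

end Crab

/-- Let `b₁, b₂, r ≥ 1` be integers, and let `T = CG(b₁,b₂,r)` be the crab
graph with leaves as boundary. Then the Steklov eigenvalues of `T` are `σ₁ = 0`,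
`σ₂ = (b₁+b₂)/(b₁b₂ + r(b₁+b₂))`, and `σₖ = 1/r` for all `3 ≤ k ≤ b₁+b₂`. -/
theorem stmt10 (b₁ b₂ r : ℕ) (hb₁ : 1 ≤ b₁) (hb₂ : 1 ≤ b₂) (hr : 1 ≤ r) :
    steklovEig (crabGraph b₁ b₂ r) (leavesFinset (crabGraph b₁ b₂ r)) 1 = 0 ∧
    steklovEig (crabGraph b₁ b₂ r) (leavesFinset (crabGraph b₁ b₂ r)) 2 =
      ((b₁ : ℝ) + b₂) / ((b₁ : ℝ) * b₂ + r * ((b₁ : ℝ) + b₂)) ∧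
    ∀ k : ℕ, 3 ≤ k → k ≤ b₁ + b₂ →
      steklovEig (crabGraph b₁ b₂ r) (leavesFinset (crabGraph b₁ b₂ r)) k = 1 / (r : ℝ) := by
  have : NeZero b₁ := .of_pos hb₁
  have : NeZero b₂ := .of_pos hb₂
  have : NeZero r := .of_pos hr
  have hr₀ : (0 : ℝ) < r := Nat.cast_pos.2 hr
  have hgap : 0 ≤ twoStarGap (Fin b₁) (Fin b₂) (r : ℝ) := twoStarGap_nonneg hr₀.le
  have hle : twoStarGap (Fin b₁) (Fin b₂) (r : ℝ) ≤ 1 / r := twoStarGap_le hr₀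
  simp only [steklovEig_crabGraph]
  refine ⟨minMaxValue_anovaForm_one hgap (hgap.trans hle), ?_, fun k hk hkb => ?_⟩
  · rw [minMaxValue_anovaForm_two hgap hle, twoStarGap, Fintype.card_fin, Fintype.card_fin]
  · exact minMaxValue_anovaForm_of_three_le hgap hle hk (by simpa using hkb)
end
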